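/- arXiv:1801.10493 — 3 statements merged into one kernel-verified Lean document; each statement's English description precedes it below -/
import Mathlib

section
/- Let N ≥ 3 and σ ∈ (0,2). The function w(x) = [(N−σ)(N−2)]^{(N−2)/(2(2−σ))} (1 + |x|^{2−σ})^{(2−N)/(2−σ)} satisfies −Δw = |x|^{−σ} w^{2*_σ − 1} pointwise on ℝ^N ∖ {0}, where 2*_σ = 2(N−σ)/(N−2). -/
open MeasureTheory Filter Metric Set Bornology

noncomputable section

abbrev Euc (N : ℕ) := EuclideanSpace ℝ (Fin N)

/-- Euclidean norm of the `z`-component (the last `N - k` coordinates) of `x ∈ ℝ^N`. -/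
def zNorm (N k : ℕ) (x : Euc N) : ℝ :=
  Real.sqrt (∑ i : Fin N, if k ≤ (i : ℕ) then (x i) ^ 2 else 0)

/-- Euclidean norm of the `t`-component (the first `k` coordinates) of `x ∈ ℝ^N`. -/
def tNorm (N k : ℕ) (x : Euc N) : ℝ :=
  Real.sqrt (∑ i : Fin N, if (i : ℕ) < k then (x i) ^ 2 else 0)

/-- The critical Hardy–Sobolev exponent `2*_σ = 2(N-σ)/(N-2)`. -/
def twoStar (N : ℕ) (σ : ℝ) : ℝ := 2 * ((N : ℝ) - σ) / ((N : ℝ) - 2)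

/-- Dirichlet energy `∫ |∇v|²`. -/
def gradL2 (N : ℕ) (v : Euc N → ℝ) : ℝ := ∫ x, ‖fderiv ℝ v x‖ ^ 2

/-- Hardy–Sobolev integral `∫ |z|^{-σ} |v|^{2*_σ}`. -/
def hsInt (N k : ℕ) (σ : ℝ) (v : Euc N → ℝ) : ℝ :=
  ∫ x, zNorm N k x ^ (-σ) * |v x| ^ twoStar N σ

/-- Membership in `D^{1,2}(ℝ^N)`, the completion of `C_c^∞(ℝ^N)` for the norm
`v ↦ (∫ |∇v|²)^{1/2}`: `v` is a limit of smooth compactly supported functions, with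
gradients converging in `L²` (and, via the Sobolev embedding of the completion,
the functions converging in `L^{2N/(N-2)}`). -/
def MemD12 (N : ℕ) (v : Euc N → ℝ) : Prop :=
  ∃ φ : ℕ → Euc N → ℝ,
    (∀ n, ContDiff ℝ (⊤ : ℕ∞) (φ n) ∧ HasCompactSupport (φ n)) ∧
    Tendsto (fun n => eLpNorm (fun x => v x - φ n x)
      (ENNReal.ofReal (2 * (N : ℝ) / ((N : ℝ) - 2))) volume) atTop (nhds 0) ∧
    Tendsto (fun n => eLpNorm (fun x => fderiv ℝ v x - fderiv ℝ (φ n) x) 2 volume)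
      atTop (nhds 0)

/-- The best constant `S_{N,σ}` in the cylindrical Hardy–Sobolev inequality. -/
def Sconst (N k : ℕ) (σ : ℝ) : ℝ :=
  sInf {s : ℝ | ∃ v, MemD12 N v ∧ hsInt N k σ v = 1 ∧ s = gradL2 N v}

/-- A (positive) ground state for `S_{N,σ}`. -/
def GroundState (N k : ℕ) (σ : ℝ) (w : Euc N → ℝ) : Prop :=
  MemD12 N w ∧ (∀ x, 0 < w x) ∧ hsInt N k σ w = 1 ∧ gradL2 N w = Sconst N k σ

/-- Membership in `H¹₀(Ω)`: limit of smooth functions compactly supported in `Ω`,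
in the `H¹` norm. -/
def MemH10 (N : ℕ) (Ω : Set (Euc N)) (u : Euc N → ℝ) : Prop :=
  ∃ φ : ℕ → Euc N → ℝ,
    (∀ n, ContDiff ℝ (⊤ : ℕ∞) (φ n) ∧ HasCompactSupport (φ n) ∧ tsupport (φ n) ⊆ Ω) ∧
    Tendsto (fun n => eLpNorm (fun x => u x - φ n x) 2 volume) atTop (nhds 0) ∧
    Tendsto (fun n => eLpNorm (fun x => fderiv ℝ u x - fderiv ℝ (φ n) x) 2 volume)
      atTop (nhds 0)

/-- Coercivity of the operator `-Δ + h` on `H¹₀(Ω)`. -/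
def CoerciveOp (N : ℕ) (Ω : Set (Euc N)) (h : Euc N → ℝ) : Prop :=
  ∃ c > 0, ∀ u, MemH10 N Ω u →
    c * ∫ x in Ω, (‖fderiv ℝ u x‖ ^ 2 + u x ^ 2) ≤
      ∫ x in Ω, (‖fderiv ℝ u x‖ ^ 2 + h x * u x ^ 2)

/-- The Hardy–Sobolev quotient of `u` on `Ω` with singularity `Γ` and potential `h`. -/
def hsQuot (N : ℕ) (σ : ℝ) (Ω Γ : Set (Euc N)) (h : Euc N → ℝ) (u : Euc N → ℝ) : ℝ :=
  ((∫ x in Ω, ‖fderiv ℝ u x‖ ^ 2) + ∫ x in Ω, h x * u x ^ 2) /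
    (∫ x in Ω, infDist x Γ ^ (-σ) * |u x| ^ twoStar N σ) ^ (2 / twoStar N σ)

/-- The best constant `μ_{h,σ}(Ω,Γ)`. -/
def muHS (N : ℕ) (σ : ℝ) (Ω Γ : Set (Euc N)) (h : Euc N → ℝ) : ℝ :=
  sInf {m : ℝ | ∃ u, MemH10 N Ω u ∧ ¬ (u =ᵐ[volume.restrict Ω] (0 : Euc N → ℝ)) ∧
    m = hsQuot N σ Ω Γ h u}

/-- The pointwise Laplacian of `f : ℝ^N → ℝ`. -/
def lapl (N : ℕ) (f : Euc N → ℝ) (x : Euc N) : ℝ :=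
  ∑ i : Fin N, fderiv ℝ (fun y => fderiv ℝ f y (EuclideanSpace.single i 1)) x
    (EuclideanSpace.single i 1)

/-- The explicit extremal for the Hardy–Sobolev inequality with point singularity
(`k = 0`): `w(x) = [(N-σ)(N-2)]^{(N-2)/(2(2-σ))} (1+|x|^{2-σ})^{(2-N)/(2-σ)}`. -/
def wPoint (N : ℕ) (σ : ℝ) (x : Euc N) : ℝ :=
  (((N : ℝ) - σ) * ((N : ℝ) - 2)) ^ (((N : ℝ) - 2) / (2 * (2 - σ))) *
    (1 + ‖x‖ ^ (2 - σ)) ^ ((2 - (N : ℝ)) / (2 - σ))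

theorem lapl_radial (N : ℕ) (g F : ℝ → ℝ) (F' : ℝ) (x : Euc N) (hx : x ≠ 0)
    (hg : ∀ s : ℝ, 0 < s → HasDerivAt g (F s / 2) s)
    (hF : HasDerivAt F F' (‖x‖ ^ 2)) :
    lapl N (fun y => g (‖y‖ ^ 2)) x = 2 * ‖x‖ ^ 2 * F' + N * F (‖x‖ ^ 2) := by
  have h1 : ∀ (i : Fin N) (y : Euc N), y ≠ 0 →
      fderiv ℝ (fun y : Euc N => g (‖y‖ ^ 2)) y (EuclideanSpace.single i 1)
        = F (‖y‖ ^ 2) * y i := by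
    intro i y hy
    have hs : (0 : ℝ) < ‖y‖ ^ 2 := by positivity
    have hd := (hg _ hs).comp_hasFDerivAt y (hasStrictFDerivAt_norm_sq y).hasFDerivAt
    have := hd.fderiv
    simp only [Function.comp_def] at this
    rw [this]
    simp [EuclideanSpace.inner_single_right]
    ring
  have h2 : ∀ i : Fin N,
      fderiv ℝ (fun y => fderiv ℝ (fun y : Euc N => g (‖y‖ ^ 2)) y
        (EuclideanSpace.single i 1)) x (EuclideanSpace.single i 1)
        = 2 * F' * (x i) ^ 2 + F (‖x‖ ^ 2) := by
    intro i
    have hev : (fun y => fderiv ℝ (fun y : Euc N => g (‖y‖ ^ 2)) y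
        (EuclideanSpace.single i 1)) =ᶠ[nhds x] fun y => F (‖y‖ ^ 2) * y i := by
      filter_upwards [isOpen_ne.mem_nhds hx] with y hy
      exact h1 i y hy
    rw [hev.fderiv_eq]
    have hd := hF.comp_hasFDerivAt x (hasStrictFDerivAt_norm_sq x).hasFDerivAt
    have hp : HasFDerivAt (fun y : Euc N => y i)
        (EuclideanSpace.proj i : Euc N →L[ℝ] ℝ) x :=
      (EuclideanSpace.proj i : Euc N →L[ℝ] ℝ).hasFDerivAt
    have := (hd.mul hp).fderiv
    simp only [Function.comp_def, Pi.mul_def] at this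
    rw [this]
    simp [EuclideanSpace.inner_single_right]
    ring
  unfold lapl
  rw [Finset.sum_congr rfl (fun i _ => h2 i), Finset.sum_add_distrib, ← Finset.mul_sum,
    EuclideanSpace.real_norm_sq_eq]
  simp
  ring

theorem derivs_aux (C m a p s : ℝ) (hs : 0 < s) :
    HasDerivAt (fun s : ℝ => C * m * (1 + s ^ (p / 2)) ^ a * s ^ (p / 2 - 1))
      (C * m * (a * (p / 2) * (1 + s ^ (p / 2)) ^ (a - 1) * s ^ (p / 2 - 1) * s ^ (p / 2 - 1)
        + (p / 2 - 1) * (1 + s ^ (p / 2)) ^ a * s ^ (p / 2 - 1 - 1))) s ∧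
    HasDerivAt (fun s : ℝ => C * (1 + s ^ (p / 2)) ^ a)
      (C * (a * p) * (1 + s ^ (p / 2)) ^ (a - 1) * s ^ (p / 2 - 1) / 2) s := by
  have hq : (0 : ℝ) < s ^ (p / 2) := Real.rpow_pos_of_pos hs _
  have h1 : HasDerivAt (fun s : ℝ => (1 + s ^ (p / 2))) (p / 2 * s ^ (p / 2 - 1)) s :=
    (Real.hasDerivAt_rpow_const (Or.inl hs.ne')).const_add 1
  have h2 := h1.rpow_const (p := a) (Or.inl (by positivity))
  have h3 := Real.hasDerivAt_rpow_const (x := s) (p := p / 2 - 1) (Or.inl hs.ne')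
  refine ⟨?_, ?_⟩
  · refine ((h2.const_mul (C * m)).mul h3).congr_deriv ?_
    ring
  · refine (h2.const_mul C).congr_deriv ?_
    ring

/-- For `N ≥ 3`, `σ ∈ (0,2)`, the function `wPoint N σ` satisfies
`-Δw = |x|^{-σ} w^{2*_σ - 1}` pointwise on `ℝ^N ∖ {0}`. -/
theorem statement9 (N : ℕ) (σ : ℝ) (hN : 3 ≤ N) (hσ : σ ∈ Set.Ioo (0 : ℝ) 2) :
    ∀ x : Euc N, x ≠ 0 →
      -lapl N (wPoint N σ) x = ‖x‖ ^ (-σ) * wPoint N σ x ^ (twoStar N σ - 1) := by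
  intro x hx
  obtain ⟨hσ0, hσ2⟩ := hσ
  have hN' : (3 : ℝ) ≤ N := by exact_mod_cast hN
  have hp : (2 - σ) ≠ 0 := by linarith
  have hm : ((N : ℝ) - 2) ≠ 0 := by linarith
  set n : ℝ := (N : ℝ) with hn
  set A : ℝ := (n - σ) * (n - 2) with hA
  have hApos : 0 < A := mul_pos (by linarith) (by linarith)
  set C : ℝ := A ^ ((n - 2) / (2 * (2 - σ))) with hC
  have hCpos : 0 < C := Real.rpow_pos_of_pos hApos _
  set a : ℝ := (2 - n) / (2 - σ) with ha
  have hap : a * (2 - σ) = 2 - n := by rw [ha]; field_simp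
  have hnorm : ∀ (t : ℝ) (y : Euc N), (‖y‖ ^ 2) ^ (t / 2) = ‖y‖ ^ t := by
    intro t y
    rw [← Real.rpow_natCast, ← Real.rpow_mul (norm_nonneg y)]
    congr 1
    push_cast
    ring
  have hw : wPoint N σ = fun y : Euc N =>
      (fun s : ℝ => C * (1 + s ^ ((2 - σ) / 2)) ^ a) (‖y‖ ^ 2) := by
    funext y
    simp only [hnorm]
    rfl
  have hs : (0 : ℝ) < ‖x‖ ^ 2 := by positivity
  have hL := lapl_radial N (fun s : ℝ => C * (1 + s ^ ((2 - σ) / 2)) ^ a)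
    (fun s : ℝ => C * (2 - n) * (1 + s ^ ((2 - σ) / 2)) ^ (a - 1) * s ^ ((2 - σ) / 2 - 1)) _ x hx
    (fun s hs => by
      have := (derivs_aux C 0 a (2 - σ) s hs).2
      rwa [hap] at this)
    (derivs_aux C (2 - n) (a - 1) (2 - σ) _ hs).1
  rw [hw, hL]
  simp only
  generalize hS : ‖x‖ ^ 2 = s at hs
  have hx' : ‖x‖ ^ (-σ) = s ^ ((2 - σ) / 2 - 1) := by
    rw [← hnorm, hS]; congr 1; ring
  rw [hx']
  have hq : (0 : ℝ) < s ^ ((2 - σ) / 2) := Real.rpow_pos_of_pos hs _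
  have e1 : s ^ ((2 - σ) / 2 - 1 - 1) * s = s ^ ((2 - σ) / 2 - 1) := by
    rw [Real.rpow_sub_one hs.ne' ((2 - σ) / 2 - 1)]; field_simp
  have e2 : s ^ ((2 - σ) / 2 - 1) * s = s ^ ((2 - σ) / 2) := by
    rw [Real.rpow_sub_one hs.ne']; field_simp
  have hQ : (0 : ℝ) < 1 + s ^ ((2 - σ) / 2) := by positivity
  have e3 : (1 + s ^ ((2 - σ) / 2)) ^ (a - 1)
      = (1 + s ^ ((2 - σ) / 2)) ^ (a - 1 - 1) * (1 + s ^ ((2 - σ) / 2)) := by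
    rw [Real.rpow_sub_one hQ.ne' (a - 1)]; field_simp
  have hC2 : C ^ (twoStar N σ - 1) = C * A := by
    rw [hC, ← Real.rpow_mul hApos.le, ← Real.rpow_add_one hApos.ne']
    congr 1
    unfold twoStar
    rw [← hn]
    field_simp
    ring
  have hQ2 : ((1 + s ^ ((2 - σ) / 2)) ^ a) ^ (twoStar N σ - 1)
      = (1 + s ^ ((2 - σ) / 2)) ^ (a - 1 - 1) := by
    rw [← Real.rpow_mul hQ.le]
    congr 1
    unfold twoStar
    rw [← hn, ha]
    field_simp
    ring
  rw [Real.mul_rpow hCpos.le (Real.rpow_nonneg hQ.le _), hC2, hQ2, e3]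
  generalize (1 + s ^ ((2 - σ) / 2)) ^ (a - 1 - 1) = W
  generalize s ^ ((2 - σ) / 2 - 1 - 1) = T2 at *
  generalize s ^ ((2 - σ) / 2 - 1) = T1 at *
  generalize s ^ ((2 - σ) / 2) = T0 at *
  subst e2
  rw [hA]
  subst e1
  linear_combination (-(C * (2 - n) * W * (T2 * s) * (T2 * s) * s)) * hap
end
end

section
/- Let N ≥ 3 and 1 ≤ k ≤ N−2, and write points of ℝ^N as x = (t,z) ∈ ℝ^k × ℝ^{N−k}. The function w(t,z) = [(N−2)(N−k−1)]^{(N−2)/2} ((1+|z|)² + |t|²)^{(2−N)/2} satisfies −Δw = |z|^{−1} w^{N/(N−2)} pointwise on {(t,z) ∈ ℝ^k × ℝ^{N−k} : z ≠ 0}. (Note that N/(N−2) = 2*_1 − 1 with 2*_1 = 2(N−1)/(N−2), so w solves the Euler–Lagrange equation of the Hardy–Sobolev inequality with σ = 1.) -/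
open MeasureTheory Filter Metric Set Bornology

noncomputable section

/-- The explicit extremal for the cylindrical Hardy–Sobolev inequality with `σ = 1`:
`w(t,z) = [(N-2)(N-k-1)]^{(N-2)/2} ((1+|z|)² + |t|²)^{(2-N)/2}`. -/
def wCyl (N k : ℕ) (x : Euc N) : ℝ :=
  (((N : ℝ) - 2) * ((N : ℝ) - k - 1)) ^ (((N : ℝ) - 2) / 2) *
    ((1 + zNorm N k x) ^ 2 + tNorm N k x ^ 2) ^ ((2 - (N : ℝ)) / 2)

/-- Indicator of the `z`-coordinates. -/
def cInd (N k : ℕ) (i : Fin N) : ℝ := if k ≤ (i : ℕ) then 1 else 0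

lemma zNorm_eq (N k : ℕ) (x : Euc N) :
    zNorm N k x = Real.sqrt (∑ i : Fin N, cInd N k i * (x i) ^ 2) := by
  unfold zNorm cInd
  congr 1
  refine Finset.sum_congr rfl fun i _ => ?_
  split_ifs <;> simp

lemma zNorm_sq (N k : ℕ) (x : Euc N) :
    zNorm N k x ^ 2 = ∑ i : Fin N, cInd N k i * (x i) ^ 2 := by
  rw [zNorm_eq, Real.sq_sqrt]
  refine Finset.sum_nonneg fun i _ => ?_
  unfold cInd
  split_ifs <;> positivity

lemma tNorm_sq (N k : ℕ) (x : Euc N) :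
    tNorm N k x ^ 2 = ∑ i : Fin N, (1 - cInd N k i) * (x i) ^ 2 := by
  unfold tNorm cInd
  rw [Real.sq_sqrt]
  · refine Finset.sum_congr rfl fun i _ => ?_
    by_cases h : k ≤ (i : ℕ)
    · simp [h]
    · simp [h, not_le.mp h]
  · refine Finset.sum_nonneg fun i _ => ?_
    split_ifs <;> positivity

lemma hasFDerivAt_coord (N : ℕ) (i : Fin N) (x : Euc N) :
    HasFDerivAt (fun y : Euc N => y i) (EuclideanSpace.proj (𝕜 := ℝ) i) x :=
  (EuclideanSpace.proj (𝕜 := ℝ) i : Euc N →L[ℝ] ℝ).hasFDerivAt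

lemma quad_deriv (N : ℕ) (c : Fin N → ℝ) (x : Euc N) :
    ∃ L : Euc N →L[ℝ] ℝ, HasFDerivAt (fun y : Euc N => ∑ i, c i * (y i) ^ 2) L x ∧
      ∀ i, L (EuclideanSpace.single i 1) = 2 * c i * x i := by
  refine ⟨_, HasFDerivAt.fun_sum fun i _ => ((hasFDerivAt_coord N i x).pow 2).const_mul (c i), ?_⟩
  intro i
  simp [Pi.single_apply]
  ring

lemma zNorm_deriv (N k : ℕ) (x : Euc N) (hx : zNorm N k x ≠ 0) :
    ∃ L : Euc N →L[ℝ] ℝ, HasFDerivAt (zNorm N k) L x ∧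
      ∀ i, L (EuclideanSpace.single i 1) = cInd N k i * x i / zNorm N k x := by
  obtain ⟨L, hL, hLi⟩ := quad_deriv N (cInd N k) x
  have h0 : (∑ i, cInd N k i * (x i) ^ 2) ≠ 0 := by
    rw [← zNorm_sq]; positivity
  have h := hL.sqrt h0
  rw [← zNorm_eq] at h
  refine ⟨_, h.congr_of_eventuallyEq (Eventually.of_forall fun y => zNorm_eq N k y), ?_⟩
  intro i
  simp [hLi]
  field_simp

/-- The base `(1+|z|)²+|t|²`. -/
def Pfun (N k : ℕ) (x : Euc N) : ℝ := (1 + zNorm N k x) ^ 2 + tNorm N k x ^ 2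

lemma Pfun_eq (N k : ℕ) (x : Euc N) :
    Pfun N k x = 1 + 2 * zNorm N k x + ∑ i : Fin N, 1 * (x i) ^ 2 := by
  have : ∑ i : Fin N, 1 * (x i) ^ 2 = zNorm N k x ^ 2 + tNorm N k x ^ 2 := by
    rw [zNorm_sq, tNorm_sq, ← Finset.sum_add_distrib]
    exact Finset.sum_congr rfl fun i _ => by ring
  rw [this, Pfun]; ring

lemma zNorm_nonneg (N k : ℕ) (x : Euc N) : 0 ≤ zNorm N k x := Real.sqrt_nonneg _

lemma Pfun_pos (N k : ℕ) (x : Euc N) : 0 < Pfun N k x := by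
  have := zNorm_nonneg N k x
  unfold Pfun; positivity

lemma Pfun_deriv (N k : ℕ) (x : Euc N) (hx : zNorm N k x ≠ 0) :
    ∃ L : Euc N →L[ℝ] ℝ, HasFDerivAt (Pfun N k) L x ∧
      ∀ i, L (EuclideanSpace.single i 1) = 2 * x i + 2 * cInd N k i * x i / zNorm N k x := by
  obtain ⟨L, hL, hLi⟩ := zNorm_deriv N k x hx
  obtain ⟨M, hM, hMi⟩ := quad_deriv N (fun _ => 1) x
  refine ⟨_, (((hL.const_mul 2).const_add 1).add hM).congr_of_eventuallyEq
    (Eventually.of_forall fun y => Pfun_eq N k y), ?_⟩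
  intro i
  simp [hLi, hMi]
  ring

lemma pow_deriv (N k : ℕ) (p : ℝ) (x : Euc N) (hx : zNorm N k x ≠ 0) :
    ∃ L : Euc N →L[ℝ] ℝ, HasFDerivAt (fun y => Pfun N k y ^ p) L x ∧
      ∀ i, L (EuclideanSpace.single i 1) =
        p * Pfun N k x ^ (p - 1) * (2 * x i + 2 * cInd N k i * x i / zNorm N k x) := by
  obtain ⟨L, hL, hLi⟩ := Pfun_deriv N k x hx
  refine ⟨_, hL.rpow_const (p := p) (Or.inl (Pfun_pos N k x).ne'), ?_⟩
  intro i
  simp [hLi]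

lemma continuous_zNorm (N k : ℕ) : Continuous (zNorm N k) := by
  have : zNorm N k = fun x => Real.sqrt (∑ i : Fin N, cInd N k i * (x i) ^ 2) :=
    funext (zNorm_eq N k)
  rw [this]
  fun_prop

lemma second_deriv (N k : ℕ) (C p : ℝ) (x : Euc N) (hx : zNorm N k x ≠ 0) (i : Fin N) :
    fderiv ℝ (fun y => fderiv ℝ (fun y => C * Pfun N k y ^ p) y (EuclideanSpace.single i 1)) x
      (EuclideanSpace.single i 1) =
    C * p * ((p - 1) * Pfun N k x ^ (p - 2) *
        (2 * x i + 2 * cInd N k i * x i / zNorm N k x) ^ 2 +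
      Pfun N k x ^ (p - 1) * (2 + 2 * cInd N k i / zNorm N k x -
        2 * cInd N k i ^ 2 * x i ^ 2 / zNorm N k x ^ 3)) := by
  have hev : (fun y => fderiv ℝ (fun y => C * Pfun N k y ^ p) y (EuclideanSpace.single i 1))
      =ᶠ[nhds x] fun y => (C * p) * (Pfun N k y ^ (p - 1) *
        (y i * (2 + 2 * cInd N k i * (zNorm N k y)⁻¹))) := by
    filter_upwards [(continuous_zNorm N k).continuousAt.eventually_ne hx] with y hy
    obtain ⟨L, hL, hLi⟩ := pow_deriv N k p y hy
    rw [(hL.const_mul C).fderiv]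
    simp [hLi]
    ring
  rw [hev.fderiv_eq]
  obtain ⟨L, hL, hLi⟩ := pow_deriv N k (p - 1) x hx
  obtain ⟨M, hM, hMi⟩ := zNorm_deriv N k x hx
  have hinv := (hasDerivAt_inv hx).comp_hasFDerivAt x hM
  have h := (hL.mul ((hasFDerivAt_coord N i x).mul
    ((hinv.const_mul (2 * cInd N k i)).const_add 2))).const_mul (C * p)
  have h2 : HasFDerivAt (fun y => (C * p) * (Pfun N k y ^ (p - 1) *
        (y i * (2 + 2 * cInd N k i * (zNorm N k y)⁻¹)))) _ x := h
  rw [h2.fderiv]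
  have e : p - 1 - 1 = p - 2 := by ring
  simp [hLi, hMi, e]
  field_simp
  ring

lemma sum_cInd (N k : ℕ) (hk : k ≤ N) : ∑ i : Fin N, cInd N k i = (N : ℝ) - k := by
  unfold cInd
  rw [Fin.sum_univ_eq_sum_range (fun i => if k ≤ i then (1 : ℝ) else 0) N,
    ← Finset.sum_range_add_sum_Ico _ hk]
  rw [Finset.sum_eq_zero, Finset.sum_congr rfl (g := fun _ => (1 : ℝ))]
  · simp [Nat.cast_sub hk]
  · intro i hi; simp [(Finset.mem_Ico.mp hi).1]
  · intro i hi; simp [Finset.mem_range.mp hi]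

lemma lapl_pow (N k : ℕ) (hk : k ≤ N) (C p : ℝ) (x : Euc N) (hx : zNorm N k x ≠ 0) :
    lapl N (fun y => C * Pfun N k y ^ p) x =
      C * p * Pfun N k x ^ (p - 1) *
        (4 * (p - 1) + 2 * N + 2 * ((N : ℝ) - k - 1) / zNorm N k x) := by
  unfold lapl
  simp_rw [second_deriv N k C p x hx]
  have hc : ∀ i, cInd N k i ^ 2 = cInd N k i := by
    intro i; unfold cInd; split_ifs <;> simp
  set r := zNorm N k x with hr
  have hP := Pfun_eq N k x
  have hPp := Pfun_pos N k x
  have hpow : Pfun N k x ^ (p - 1) = Pfun N k x ^ (p - 2) * Pfun N k x := by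
    rw [← Real.rpow_add_one hPp.ne']; congr 1; ring
  have hterm : ∀ i : Fin N, C * p * ((p - 1) * Pfun N k x ^ (p - 2) *
        (2 * x i + 2 * cInd N k i * x i / r) ^ 2 +
      Pfun N k x ^ (p - 1) * (2 + 2 * cInd N k i / r -
        2 * cInd N k i ^ 2 * x i ^ 2 / r ^ 3)) =
      C * p * (p - 1) * Pfun N k x ^ (p - 2) * 4 * (1 * x i ^ 2) +
      (C * p * (p - 1) * Pfun N k x ^ (p - 2) * (8 / r + 4 / r ^ 2)
        - C * p * Pfun N k x ^ (p - 1) * 2 / r ^ 3) * (cInd N k i * x i ^ 2) +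
      C * p * Pfun N k x ^ (p - 1) * 2 / r * cInd N k i +
      C * p * Pfun N k x ^ (p - 1) * 2 := by
    intro i
    have : (2 * x i + 2 * cInd N k i * x i / r) ^ 2 =
      4 * x i ^ 2 + 8 / r * (cInd N k i * x i ^ 2) + 4 / r ^ 2 * (cInd N k i ^ 2 * x i ^ 2) := by
      ring
    rw [this, hc]
    ring
  simp_rw [hterm]
  rw [Finset.sum_add_distrib, Finset.sum_add_distrib, Finset.sum_add_distrib,
    ← Finset.mul_sum, ← Finset.mul_sum, ← Finset.mul_sum, ← Finset.mul_sum Finset.univ (cInd N k), sum_cInd N k hk, ← zNorm_sq, ← hr]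
  have hS : 1 * ∑ i : Fin N, (x i) ^ 2 = Pfun N k x - 1 - 2 * r := by
    rw [Finset.mul_sum, hP]; ring
  rw [hS, hpow]
  simp only [Finset.sum_const, Finset.card_univ, Fintype.card_fin, nsmul_eq_mul]
  field_simp
  ring

/-- For `N ≥ 3` and `1 ≤ k ≤ N-2`, the function `wCyl N k` satisfies
`-Δw = |z|⁻¹ w^{N/(N-2)}` pointwise on `{z ≠ 0}`; note `N/(N-2) = 2*_1 - 1`. -/
theorem statement10 (N k : ℕ) (hN : 3 ≤ N) (hk1 : 1 ≤ k) (hk2 : k ≤ N - 2) :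
    ∀ x : Euc N, zNorm N k x ≠ 0 →
      -lapl N (wCyl N k) x =
        (zNorm N k x)⁻¹ * wCyl N k x ^ ((N : ℝ) / ((N : ℝ) - 2)) := by
  intro x hx
  have hkN : k + 2 ≤ N := by omega
  have hkR : (k : ℝ) + 2 ≤ N := by exact_mod_cast hkN
  have hNR : (3 : ℝ) ≤ N := by exact_mod_cast hN
  have hA : 0 < ((N : ℝ) - 2) * ((N : ℝ) - k - 1) :=
    mul_pos (by linarith) (by linarith)
  have hP := Pfun_pos N k x
  have hw : wCyl N k = fun y => (((N : ℝ) - 2) * ((N : ℝ) - k - 1)) ^ (((N : ℝ) - 2) / 2) *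
      Pfun N k y ^ ((2 - (N : ℝ)) / 2) := rfl
  have hN2 : (N : ℝ) - 2 ≠ 0 := by linarith
  rw [hw, lapl_pow N k (by omega) _ _ x hx]
  beta_reduce
  generalize hAd : ((N : ℝ) - 2) * ((N : ℝ) - k - 1) = A at hA ⊢
  rw [Real.mul_rpow (Real.rpow_nonneg hA.le _) (Real.rpow_nonneg hP.le _), ← Real.rpow_mul hA.le, ← Real.rpow_mul hP.le]
  have e1 : ((N : ℝ) - 2) / 2 * ((N : ℝ) / ((N : ℝ) - 2)) = ((N : ℝ) - 2) / 2 + 1 := by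
    field_simp; ring
  have e2 : (2 - (N : ℝ)) / 2 * ((N : ℝ) / ((N : ℝ) - 2)) = (2 - (N : ℝ)) / 2 - 1 := by
    field_simp; ring
  rw [e1, e2, Real.rpow_add_one hA.ne']
  nth_rewrite 3 [← hAd]
  field_simp
  ring
end
end

section
/- Let N ≥ 5, 1 ≤ k ≤ N−2 and σ ∈ (0,2), and let w be a positive ground state for S_{N,σ}. Then the integrals ∫_{ℝ^N} |z|² |∇w|² dx, ∫_{ℝ^N} w² dx and ∫_{ℝ^N} |z|^{2−σ} w^{2*_σ} dx are finite and S_{N,σ} ∫_{ℝ^N} |z|^{2−σ} w^{2*_σ} dx = ∫_{ℝ^N} |z|² |∇w|² dx − (N−k) ∫_{ℝ^N} w² dx. -/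
open MeasureTheory Filter Metric Set Bornology
open scoped Manifold

noncomputable section

namespace PZ

open scoped Topology ENNReal

variable {N : ℕ}

/-- The weight `(1+|x|²)^{-1/2}`. -/
def sw (x : Euc N) : ℝ := (Real.sqrt (1 + ‖x‖ ^ 2))⁻¹

lemma sw_pos (x : Euc N) : 0 < sw x := by unfold sw; positivity

lemma sw_sq (x : Euc N) : sw x ^ 2 = (1 + ‖x‖ ^ 2)⁻¹ := by
  unfold sw
  rw [inv_pow, Real.sq_sqrt (by positivity)]

lemma sw_cont : Continuous (sw : Euc N → ℝ) := by
  unfold sw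
  refine Continuous.inv₀ (by fun_prop) (fun x => by positivity)

lemma norm_gradient (f : Euc N → ℝ) (x : Euc N) : ‖gradient f x‖ = ‖fderiv ℝ f x‖ := by
  unfold gradient; simp

lemma gradient_coord (f : Euc N → ℝ) (x : Euc N) (i : Fin N) :
    gradient f x i = fderiv ℝ f x (EuclideanSpace.single i 1) := by
  have h : inner ℝ (gradient f x) (EuclideanSpace.single i (1 : ℝ)) =
      fderiv ℝ f x (EuclideanSpace.single i 1) := by
    unfold gradient; simp
  rw [← h, EuclideanSpace.inner_single_right]; simp

lemma gradient_mul {f g : Euc N → ℝ} {x : Euc N} (hf : DifferentiableAt ℝ f x)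
    (hg : DifferentiableAt ℝ g x) :
    gradient (fun y => f y * g y) x = f x • gradient g x + g x • gradient f x := by
  unfold gradient
  rw [fderiv_fun_mul hf hg]; simp

lemma gradient_sub {f g : Euc N → ℝ} {x : Euc N} (hf : DifferentiableAt ℝ f x)
    (hg : DifferentiableAt ℝ g x) :
    gradient (fun y => f y - g y) x = gradient f x - gradient g x := by
  unfold gradient
  rw [fderiv_fun_sub hf hg]; simp

lemma gradient_meas (f : Euc N → ℝ) : AEStronglyMeasurable (gradient f) volume := by
  have h : Measurable (fderiv ℝ f) := measurable_fderiv ℝ f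
  have h2 : Measurable (gradient f) :=
    ((InnerProductSpace.toDual ℝ (Euc N)).symm.continuous.measurable).comp h
  exact h2.aestronglyMeasurable

/-- Test functions. -/
def Tst (φ : Euc N → ℝ) : Prop := ContDiff ℝ (⊤ : ℕ∞) φ ∧ HasCompactSupport φ

lemma Tst.diff {φ : Euc N → ℝ} (h : Tst φ) : Differentiable ℝ φ :=
  h.1.differentiable (by simp)

lemma Tst.cont_grad {φ : Euc N → ℝ} (h : Tst φ) : Continuous (gradient φ) := by
  unfold gradient
  exact (InnerProductSpace.toDual ℝ (Euc N)).symm.continuous.comp (h.1.continuous_fderiv (by simp))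

lemma Tst.supp_grad {φ : Euc N → ℝ} (h : Tst φ) : HasCompactSupport (gradient φ) := by
  have := h.2.fderiv (𝕜 := ℝ)
  exact this.comp_left (g := (InnerProductSpace.toDual ℝ (Euc N)).symm) (by simp)

lemma Tst.memLp_grad {φ : Euc N → ℝ} (h : Tst φ) (p : ℝ≥0∞) : MemLp (gradient φ) p volume :=
  h.cont_grad.memLp_of_hasCompactSupport h.supp_grad

lemma Tst.memLp_sw {φ : Euc N → ℝ} (h : Tst φ) (p : ℝ≥0∞) :
    MemLp (fun x => sw x * φ x) p volume :=
  (sw_cont.mul h.1.continuous).memLp_of_hasCompactSupport h.2.mul_left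

lemma Tst.sub {φ ψ : Euc N → ℝ} (h : Tst φ) (h' : Tst ψ) : Tst (fun x => φ x - ψ x) :=
  ⟨h.1.sub h'.1, h.2.sub h'.2⟩

lemma Tst.smooth_mul {φ η : Euc N → ℝ} (h : Tst φ) (hη : ContDiff ℝ (⊤ : ℕ∞) η) :
    Tst (fun x => η x * φ x) :=
  ⟨hη.mul h.1, h.2.mul_left⟩

/-- Continuity of the `L²` inner product. -/
lemma tendsto_inner {F : Type*} [NormedAddCommGroup F] [InnerProductSpace ℝ F]
    {f g : ℕ → Euc N → F} {f0 g0 : Euc N → F}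
    (hf : ∀ n, MemLp (f n) 2 volume) (hg : ∀ n, MemLp (g n) 2 volume)
    (hf0 : MemLp f0 2 volume) (hg0 : MemLp g0 2 volume)
    (h1 : Tendsto (fun n => eLpNorm (fun x => f n x - f0 x) 2 volume) atTop (𝓝 0))
    (h2 : Tendsto (fun n => eLpNorm (fun x => g n x - g0 x) 2 volume) atTop (𝓝 0)) :
    Tendsto (fun n => ∫ x, inner ℝ (f n x) (g n x)) atTop (𝓝 (∫ x, inner ℝ (f0 x) (g0 x))) := by
  have a1 := (Lp.tendsto_Lp_iff_tendsto_eLpNorm'' f hf f0 hf0).2 h1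
  have a2 := (Lp.tendsto_Lp_iff_tendsto_eLpNorm'' g hg g0 hg0).2 h2
  have key : ∀ (a b : Euc N → F) (ha : MemLp a 2 volume) (hb : MemLp b 2 volume),
      inner ℝ (ha.toLp a) (hb.toLp b) = ∫ x, inner ℝ (a x) (b x) := by
    intro a b ha hb
    rw [L2.inner_def]
    apply integral_congr_ae
    filter_upwards [ha.coeFn_toLp, hb.coeFn_toLp] with x h h'
    rw [h, h']
  have := a1.inner (𝕜 := ℝ) a2
  simpa only [key] using this

lemma tendsto_eLp_bound {F F' : Type*} [NormedAddCommGroup F] [NormedAddCommGroup F']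
    {f : ℕ → Euc N → F} {g : ℕ → Euc N → F'} (C : ℝ) (h : ∀ n x, ‖f n x‖ ≤ C * ‖g n x‖)
    (hg : Tendsto (fun n => eLpNorm (g n) 2 volume) atTop (𝓝 0)) :
    Tendsto (fun n => eLpNorm (f n) 2 volume) atTop (𝓝 0) := by
  have : Tendsto (fun n => ENNReal.ofReal C * eLpNorm (g n) 2 volume) atTop (𝓝 0) := by
    have := ENNReal.Tendsto.const_mul hg (a := ENNReal.ofReal C) (Or.inr ENNReal.ofReal_ne_top)
    simpa using this
  refine tendsto_of_tendsto_of_tendsto_of_le_of_le tendsto_const_nhds this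
    (fun _ => zero_le) (fun n => ?_)
  exact eLpNorm_le_mul_eLpNorm_of_ae_le_mul (Eventually.of_forall (h n)) 2

/-- `(u,H)` is a limit of test functions with their gradients. -/
structure V (u : Euc N → ℝ) (H : Euc N → Euc N) : Prop where
  mu : MemLp (fun x => sw x * u x) 2 volume
  mH : MemLp H 2 volume
  ex : ∃ φ : ℕ → Euc N → ℝ, (∀ n, Tst (φ n)) ∧
    Tendsto (fun n => eLpNorm (fun x => sw x * φ n x - sw x * u x) 2 volume) atTop (𝓝 0) ∧
    Tendsto (fun n => eLpNorm (fun x => gradient (φ n) x - H x) 2 volume) atTop (𝓝 0)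

lemma V.meas {u : Euc N → ℝ} {H : Euc N → Euc N} (h : V u H) :
    AEStronglyMeasurable u volume := by
  have := h.mu.1.mul ((sw_cont (N := N)).inv₀ (fun x => (sw_pos x).ne')).aestronglyMeasurable
  refine this.congr (Eventually.of_forall fun x => ?_)
  have := (sw_pos x).ne'
  simp only [Pi.mul_apply, Pi.inv_apply]
  field_simp

lemma V.mul {u : Euc N → ℝ} {H : Euc N → Euc N} (h : V u H) {η : Euc N → ℝ} {C : ℝ}
    (hη : ContDiff ℝ (⊤ : ℕ∞) η) (hC : ∀ x, |η x| ≤ C) (hC' : ∀ x, ‖gradient η x‖ ≤ C * sw x) :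
    V (fun x => η x * u x) (fun x => η x • H x + u x • gradient η x) := by
  obtain ⟨φ, hφ, h1, h2⟩ := h.ex
  have hηd : Differentiable ℝ η := hη.differentiable (by simp)
  have mη : AEStronglyMeasurable η volume := hη.continuous.aestronglyMeasurable
  have mu : AEStronglyMeasurable u volume := h.meas
  have e2 : ∀ x (t : ℝ), ‖t • gradient η x‖ ≤ C * ‖sw x * t‖ := by
    intro x t
    rw [norm_smul, norm_mul, Real.norm_of_nonneg (sw_pos x).le]
    nlinarith [mul_le_mul_of_nonneg_left (hC' x) (norm_nonneg t)]
  have m2 : MemLp (fun x => u x • gradient η x) 2 volume := by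
    refine MemLp.of_le_mul (c := C) h.mu (mu.smul (gradient_meas η)) (Eventually.of_forall ?_)
    intro x; exact e2 x _
  have m1 : MemLp (fun x => η x • H x) 2 volume := by
    refine MemLp.of_le_mul (c := C) h.mH (mη.smul h.mH.1) (Eventually.of_forall ?_)
    intro x
    rw [norm_smul]; exact mul_le_mul_of_nonneg_right (hC x) (norm_nonneg _)
  refine ⟨?_, m1.add m2, fun n x => η x * φ n x, fun n => (hφ n).smooth_mul hη, ?_, ?_⟩
  · refine MemLp.of_le_mul (c := C) h.mu (sw_cont.aestronglyMeasurable.mul (mη.mul mu))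
      (Eventually.of_forall ?_)
    intro x
    have : sw x * (η x * u x) = η x * (sw x * u x) := by ring
    rw [this, norm_mul]; exact mul_le_mul_of_nonneg_right (hC x) (norm_nonneg _)
  · refine tendsto_eLp_bound C (fun n x => ?_) h1
    have : sw x * (η x * φ n x) - sw x * (η x * u x) = η x * (sw x * φ n x - sw x * u x) := by ring
    rw [this, norm_mul]; exact mul_le_mul_of_nonneg_right (hC x) (norm_nonneg _)
  · have t1 : Tendsto (fun n => eLpNorm (fun x => η x • (gradient (φ n) x - H x)) 2 volume)
        atTop (𝓝 0) := by
      refine tendsto_eLp_bound C (fun n x => ?_) h2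
      rw [norm_smul]; exact mul_le_mul_of_nonneg_right (hC x) (norm_nonneg _)
    have t2 : Tendsto (fun n => eLpNorm (fun x => (φ n x - u x) • gradient η x) 2 volume)
        atTop (𝓝 0) := by
      refine tendsto_eLp_bound C (fun n x => ?_) h1
      rw [← mul_sub]; exact e2 x _
    have t3 := t1.add t2
    rw [add_zero] at t3
    refine tendsto_of_tendsto_of_tendsto_of_le_of_le tendsto_const_nhds t3
      (fun _ => zero_le) (fun n => ?_)
    have e : (fun x => gradient (fun x => η x * φ n x) x - (η x • H x + u x • gradient η x)) =
        (fun x => η x • (gradient (φ n) x - H x)) + (fun x => (φ n x - u x) • gradient η x) := by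
      funext x
      rw [gradient_mul (hηd x) ((hφ n).diff x)]
      simp only [Pi.add_apply, smul_sub, sub_smul]
      abel
    simp only [e]
    exact eLpNorm_add_le (mη.smul ((hφ n).cont_grad.aestronglyMeasurable.sub h.mH.1))
      (((hφ n).1.continuous.aestronglyMeasurable.sub mu).smul (gradient_meas η)) (by norm_num)

/-- Integration by parts for test functions. -/
lemma ibp_tst {φ f : Euc N → ℝ} (h : Tst φ) (hf : ContDiff ℝ (⊤ : ℕ∞) f) (i : Fin N) :
    Integrable (fun x => φ x ^ 2 * gradient f x i + 2 * (φ x * gradient φ x i * f x)) ∧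
    ∫ x, (φ x ^ 2 * gradient f x i + 2 * (φ x * gradient φ x i * f x)) = 0 := by
  have hd : Differentiable ℝ (fun x => φ x ^ 2) := h.diff.pow 2
  have hfd : Differentiable ℝ f := hf.differentiable (by simp)
  have hs : HasCompactSupport (fun x => φ x ^ 2) :=
    h.2.comp_left (g := fun t : ℝ => t ^ 2) (by simp)
  have cφ := h.1.continuous
  have cf := hf.continuous
  have cdf : Continuous (fun x => fderiv ℝ f x (EuclideanSpace.single i 1)) :=
    (hf.continuous_fderiv (by simp)).clm_apply continuous_const
  have cdφ : Continuous (fun x => fderiv ℝ φ x (EuclideanSpace.single i 1)) :=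
    (h.1.continuous_fderiv (by simp)).clm_apply continuous_const
  have e1 : ∀ x, fderiv ℝ (fun x => φ x ^ 2) x (EuclideanSpace.single i 1) =
      2 * (φ x * fderiv ℝ φ x (EuclideanSpace.single i 1)) := by
    intro x
    rw [fderiv_fun_pow 2 (h.diff x)]
    simp; ring
  have s2 : HasCompactSupport (fun x => 2 * (φ x * gradient φ x i * f x)) := by
    have : HasCompactSupport (fun x => φ x * (2 * gradient φ x i * f x)) := h.2.mul_right
    convert this using 2
    ring
  have i1 : Integrable (fun x => φ x ^ 2 * gradient f x i) := by
    simp only [gradient_coord]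
    exact Continuous.integrable_of_hasCompactSupport (by fun_prop) hs.mul_right
  have i2 : Integrable (fun x => 2 * (φ x * gradient φ x i * f x)) := by
    refine Continuous.integrable_of_hasCompactSupport ?_ s2
    simp only [gradient_coord]
    fun_prop
  have i3 : Integrable (fun x => φ x ^ 2 * f x) :=
    Continuous.integrable_of_hasCompactSupport (by fun_prop) hs.mul_right
  refine ⟨i1.add i2, ?_⟩
  rw [integral_add i1 i2]
  have key := integral_mul_fderiv_eq_neg_fderiv_mul_of_integrable (𝕜 := ℝ) (μ := (volume : Measure (Euc N)))
    (f := fun x => φ x ^ 2) (g := f) (v := EuclideanSpace.single i 1)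
    (by refine i2.congr (Eventually.of_forall fun x => ?_)
        simp only [e1, gradient_coord]; ring)
    (by simpa only [gradient_coord] using i1) i3 (fun x _ => hd x) (fun x _ => hfd x)
  simp only [gradient_coord]
  rw [key]
  simp only [e1]
  rw [neg_add_eq_zero]
  congr 1; funext x; ring

end PZ

namespace PZ

open scoped Topology ENNReal

variable {N : ℕ}

def rr (ε : ℝ) (x : Euc N) : ℝ := (1 + ε * ‖x‖ ^ 2)⁻¹

lemma rr_den {ε : ℝ} (hε : 0 ≤ ε) (x : Euc N) : 0 < 1 + ε * ‖x‖ ^ 2 := by positivity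

lemma rr_pos {ε : ℝ} (hε : 0 ≤ ε) (x : Euc N) : 0 < rr ε x := inv_pos.2 (rr_den hε x)

lemma rr_le_one {ε : ℝ} (hε : 0 ≤ ε) (x : Euc N) : rr ε x ≤ 1 := by
  unfold rr
  apply inv_le_one_of_one_le₀
  nlinarith [mul_nonneg hε (sq_nonneg ‖x‖)]

lemma rr_mul_le {ε : ℝ} (hε : 0 ≤ ε) (x : Euc N) : ε * ‖x‖ ^ 2 * rr ε x ≤ 1 := by
  unfold rr
  rw [← div_eq_mul_inv, div_le_one (rr_den hε x)]
  linarith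

lemma rr_one (x : Euc N) : rr 1 x = sw x ^ 2 := by
  rw [sw_sq]; simp [rr]

/-- `(1+r²)/(1+εr²) ≤ 1/ε`. -/
lemma rr_bd {ε : ℝ} (hε : 0 < ε) (hε1 : ε ≤ 1) (x : Euc N) :
    (1 + ‖x‖ ^ 2) * rr ε x ≤ ε⁻¹ := by
  have := rr_den hε.le x
  unfold rr
  rw [← div_eq_mul_inv, div_le_iff₀ this]
  have : ε⁻¹ * (1 + ε * ‖x‖ ^ 2) = ε⁻¹ + ‖x‖ ^ 2 := by field_simp
  rw [this]
  have := one_le_inv₀ hε |>.2 hε1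
  linarith

lemma rr_le_sw {ε : ℝ} (hε : 0 < ε) (hε1 : ε ≤ 1) (x : Euc N) :
    rr ε x ≤ ε⁻¹ * sw x ^ 2 := by
  have := rr_bd hε hε1 x
  rw [sw_sq, ← div_eq_mul_inv, le_div_iff₀ (by positivity)]
  linarith

lemma norm_mul_sw_le (x : Euc N) : ‖x‖ * sw x ≤ 1 := by
  unfold sw
  rw [← div_eq_mul_inv, div_le_one (by positivity)]
  apply Real.le_sqrt_of_sq_le; linarith

lemma norm_rr_le_sw {ε : ℝ} (hε : 0 < ε) (hε1 : ε ≤ 1) (x : Euc N) :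
    ‖x‖ * rr ε x ≤ ε⁻¹ * sw x := by
  have h1 := rr_le_sw hε hε1 x
  have h2 := norm_mul_sw_le x
  have h3 := sw_pos x
  have h4 : 0 < ε⁻¹ := inv_pos.2 hε
  calc ‖x‖ * rr ε x ≤ ‖x‖ * (ε⁻¹ * sw x ^ 2) := by gcongr
    _ = ε⁻¹ * sw x * (‖x‖ * sw x) := by ring
    _ ≤ ε⁻¹ * sw x * 1 := by gcongr
    _ = _ := by ring

lemma rr_smooth {ε : ℝ} (hε : 0 ≤ ε) : ContDiff ℝ (⊤ : ℕ∞) (rr ε : Euc N → ℝ) := by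
  unfold rr
  refine ContDiff.inv ?_ (fun x => (rr_den hε x).ne')
  exact contDiff_const.add (contDiff_const.mul (contDiff_norm_sq ℝ))

lemma rr_hasGrad {ε : ℝ} (hε : 0 ≤ ε) (x : Euc N) :
    HasGradientAt (rr ε) ((-(2 * ε * rr ε x ^ 2)) • x) x := by
  rw [hasGradientAt_iff_hasFDerivAt]
  have h1 : HasFDerivAt (fun y : Euc N => ‖y‖ ^ 2) (2 • (innerSL ℝ x)) x :=
    (hasStrictFDerivAt_norm_sq x).hasFDerivAt
  have h2 : HasDerivAt (fun t : ℝ => (1 + ε * t)⁻¹) (-ε / (1 + ε * ‖x‖ ^ 2) ^ 2) (‖x‖ ^ 2) := by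
    have : HasDerivAt (fun t : ℝ => 1 + ε * t) ε (‖x‖ ^ 2) := by
      simpa using ((hasDerivAt_id (‖x‖ ^ 2)).const_mul ε).const_add 1
    exact this.inv (rr_den hε x).ne'
  have h3 := h2.comp_hasFDerivAt x h1
  refine h3.congr_fderiv ?_
  ext y
  simp [rr]
  ring

lemma rr_grad {ε : ℝ} (hε : 0 ≤ ε) (x : Euc N) :
    gradient (rr ε) x = (-(2 * ε * rr ε x ^ 2)) • x := (rr_hasGrad hε x).gradient

lemma coord_smooth (i : Fin N) : ContDiff ℝ (⊤ : ℕ∞) (fun x : Euc N => x i) :=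
  (EuclideanSpace.proj (𝕜 := ℝ) i).contDiff

lemma coord_grad (i : Fin N) (x : Euc N) :
    gradient (fun x : Euc N => x i) x = EuclideanSpace.single i 1 := by
  unfold gradient
  have : fderiv ℝ (fun x : Euc N => x i) x = EuclideanSpace.proj (𝕜 := ℝ) i :=
    (EuclideanSpace.proj (𝕜 := ℝ) i).fderiv
  rw [this, LinearIsometryEquiv.symm_apply_eq]
  ext y
  simp [EuclideanSpace.inner_single_left]

lemma abs_coord_le (x : Euc N) (i : Fin N) : |x i| ≤ ‖x‖ := by
  simpa using PiLp.norm_apply_le x i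

/-- `f_i = x_i/(1+ε|x|²)` -/
def fi (ε : ℝ) (i : Fin N) (x : Euc N) : ℝ := x i * rr ε x

lemma fi_smooth {ε : ℝ} (hε : 0 ≤ ε) (i : Fin N) : ContDiff ℝ (⊤ : ℕ∞) (fi ε i) :=
  (coord_smooth i).mul (rr_smooth hε)

lemma fi_grad {ε : ℝ} (hε : 0 ≤ ε) (i : Fin N) (x : Euc N) :
    gradient (fi ε i) x = x i • ((-(2 * ε * rr ε x ^ 2)) • x) +
      rr ε x • EuclideanSpace.single i (1:ℝ) := by
  unfold fi
  rw [gradient_mul ((coord_smooth i).differentiable (by simp) x)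
    ((rr_smooth hε).differentiable (by simp) x), rr_grad hε, coord_grad]

lemma fi_grad_i {ε : ℝ} (hε : 0 ≤ ε) (i : Fin N) (x : Euc N) :
    gradient (fi ε i) x i = rr ε x - 2 * ε * rr ε x ^ 2 * (x i) ^ 2 := by
  rw [fi_grad hε]; simp; ring

/-- `h_i = x_i²/(1+ε|x|²)` -/
def hi (ε : ℝ) (i : Fin N) (x : Euc N) : ℝ := x i * fi ε i x

lemma hi_smooth {ε : ℝ} (hε : 0 ≤ ε) (i : Fin N) : ContDiff ℝ (⊤ : ℕ∞) (hi ε i) :=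
  (coord_smooth i).mul (fi_smooth hε i)

lemma hi_grad {ε : ℝ} (hε : 0 ≤ ε) (i : Fin N) (x : Euc N) :
    gradient (hi ε i) x = (-(2 * ε * rr ε x ^ 2 * (x i) ^ 2)) • x +
      (2 * x i * rr ε x) • EuclideanSpace.single i (1:ℝ) := by
  unfold hi
  rw [gradient_mul ((coord_smooth i).differentiable (by simp) x)
    ((fi_smooth hε i).differentiable (by simp) x), fi_grad hε, coord_grad, fi]
  module

lemma hi_grad_le {ε : ℝ} (hε : 0 ≤ ε) (i : Fin N) (x : Euc N) :
    ‖gradient (hi ε i) x‖ ≤ 4 * (‖x‖ * rr ε x) := by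
  rw [hi_grad hε]
  have h1 := rr_mul_le hε x
  have h2 := rr_pos hε x
  have h3 := abs_coord_le x i
  have h4 : (x i) ^ 2 ≤ ‖x‖ ^ 2 := by rw [← sq_abs]; gcongr
  refine (norm_add_le _ _).trans ?_
  rw [norm_smul, norm_smul]
  simp only [norm_neg, norm_mul, PiLp.norm_single, norm_one, mul_one, norm_pow,
    Real.norm_eq_abs, abs_of_nonneg hε, abs_of_pos h2, abs_two, sq_abs]
  have a : 2 * ε * rr ε x ^ 2 * (x i) ^ 2 * ‖x‖ ≤ 2 * (‖x‖ * rr ε x) := by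
    calc 2 * ε * rr ε x ^ 2 * (x i) ^ 2 * ‖x‖ ≤ 2 * ε * rr ε x ^ 2 * ‖x‖ ^ 2 * ‖x‖ := by gcongr
      _ = 2 * (‖x‖ * rr ε x) * (ε * ‖x‖ ^ 2 * rr ε x) := by ring
      _ ≤ 2 * (‖x‖ * rr ε x) * 1 := by gcongr
      _ = _ := by ring
  have b : 2 * |x i| * rr ε x ≤ 2 * (‖x‖ * rr ε x) := by
    calc 2 * |x i| * rr ε x ≤ 2 * ‖x‖ * rr ε x := by gcongr
      _ = _ := by ring
  linarith

lemma hi_nonneg {ε : ℝ} (hε : 0 ≤ ε) (i : Fin N) (x : Euc N) : 0 ≤ hi ε i x := by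
  have : hi ε i x = (x i)^2 * rr ε x := by unfold hi fi; ring
  rw [this]; have := rr_pos hε x; positivity

lemma hi_le_sq {ε : ℝ} (hε : 0 ≤ ε) (i : Fin N) (x : Euc N) : hi ε i x ≤ (x i) ^ 2 := by
  have : hi ε i x = (x i)^2 * rr ε x := by unfold hi fi; ring
  rw [this]; exact mul_le_of_le_one_right (sq_nonneg _) (rr_le_one hε x)

lemma hi_abs_le {ε : ℝ} (hε : 0 < ε) (hε1 : ε ≤ 1) (i : Fin N) (x : Euc N) :
    |hi ε i x| ≤ ε⁻¹ := by
  rw [abs_of_nonneg (hi_nonneg hε.le i x)]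
  have e : hi ε i x = (x i)^2 * rr ε x := by unfold hi fi; ring
  have h4 : (x i) ^ 2 ≤ 1 + ‖x‖ ^ 2 := by
    have : (x i) ^ 2 ≤ ‖x‖ ^ 2 := by rw [← sq_abs]; gcongr; exact abs_coord_le x i
    linarith
  rw [e]
  exact (mul_le_mul_of_nonneg_right h4 (rr_pos hε.le x).le).trans (rr_bd hε hε1 x)

lemma fi_le {ε : ℝ} (hε : 0 < ε) (hε1 : ε ≤ 1) (i : Fin N) (x : Euc N) :
    |fi ε i x| ≤ ε⁻¹ * sw x := by
  unfold fi
  rw [abs_mul, abs_of_pos (rr_pos hε.le x)]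
  exact (mul_le_mul_of_nonneg_right (abs_coord_le x i) (rr_pos hε.le x).le).trans
    (norm_rr_le_sw hε hε1 x)

lemma fi_grad_abs {ε : ℝ} (hε : 0 ≤ ε) (i : Fin N) (x : Euc N) :
    |gradient (fi ε i) x i| ≤ 3 * rr ε x := by
  rw [fi_grad_i hε]
  have h1 := rr_mul_le hε x
  have h2 := rr_pos hε x
  have h4 : (x i) ^ 2 ≤ ‖x‖ ^ 2 := by rw [← sq_abs]; gcongr; exact abs_coord_le x i
  have a : 2 * ε * rr ε x ^ 2 * (x i) ^ 2 ≤ 2 * rr ε x := by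
    calc 2 * ε * rr ε x ^ 2 * (x i) ^ 2 ≤ 2 * ε * rr ε x ^ 2 * ‖x‖ ^ 2 := by gcongr
      _ = 2 * rr ε x * (ε * ‖x‖ ^ 2 * rr ε x) := by ring
      _ ≤ 2 * rr ε x * 1 := by gcongr
      _ = _ := by ring
  have b : 0 ≤ 2 * ε * rr ε x ^ 2 * (x i) ^ 2 := by positivity
  rw [abs_le]; constructor <;> linarith

/-- Hardy's inequality for test functions. -/
lemma hardy_tst (hN : 5 ≤ N) {φ : Euc N → ℝ} (h : Tst φ) :
    ∫ x, (sw x * φ x) ^ 2 ≤ 4 / 9 * ∫ x, ‖gradient φ x‖ ^ 2 := by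
  have hsum : ∑ i : Fin N, ∫ x, (φ x ^ 2 * gradient (fi 1 i) x i +
      2 * (φ x * gradient φ x i * fi 1 i x)) = 0 :=
    Finset.sum_eq_zero fun i _ => (ibp_tst h (fi_smooth zero_le_one i) i).2
  have int : ∀ i : Fin N, Integrable (fun x => φ x ^ 2 * gradient (fi 1 i) x i +
      2 * (φ x * gradient φ x i * fi 1 i x)) := fun i =>
    (ibp_tst h (fi_smooth zero_le_one i) i).1
  rw [← integral_finsetSum _ (fun i _ => int i)] at hsum
  have I1 : Integrable (fun x => (sw x * φ x) ^ 2) := (h.memLp_sw 2).integrable_sq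
  have I2 : Integrable (fun x => ‖gradient φ x‖ ^ 2) := (h.memLp_grad 2).integrable_norm_pow (by simp)
  have key : ∀ x, 3 / 2 * (sw x * φ x) ^ 2 - 2 / 3 * ‖gradient φ x‖ ^ 2 ≤
      ∑ i : Fin N, (φ x ^ 2 * gradient (fi 1 i) x i + 2 * (φ x * gradient φ x i * fi 1 i x)) := by
    intro x
    have e1 : ∑ i : Fin N, (φ x ^ 2 * gradient (fi 1 i) x i +
        2 * (φ x * gradient φ x i * fi 1 i x)) =
        φ x ^ 2 * (N * rr 1 x - 2 * rr 1 x ^ 2 * ‖x‖ ^ 2) +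
          2 * (φ x * rr 1 x * inner ℝ (gradient φ x) x) := by
      rw [EuclideanSpace.real_norm_sq_eq, PiLp.inner_apply, Finset.sum_add_distrib]
      congr 1
      · simp only [fi_grad_i zero_le_one, Finset.sum_sub_distrib, ← Finset.mul_sum]
        simp
      · simp only [Finset.mul_sum, fi]
        refine Finset.sum_congr rfl fun i _ => ?_
        simp; ring
    rw [e1]
    have hN' : (5 : ℝ) ≤ N := by exact_mod_cast hN
    have r1 := rr_mul_le (N := N) zero_le_one x
    have r2 := rr_pos (N := N) zero_le_one x
    have c1 := abs_real_inner_le_norm (gradient φ x) x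
    have hs := rr_one x
    have hm := norm_mul_sw_le x
    have hp := sw_pos x
    rw [hs] at r1 r2 ⊢
    set s := sw x
    set g := ‖gradient φ x‖
    have p1 : φ x ^ 2 * (3 * s ^ 2) ≤ φ x ^ 2 * (N * s ^ 2 - 2 * (s ^ 2) ^ 2 * ‖x‖ ^ 2) := by
      apply mul_le_mul_of_nonneg_left _ (sq_nonneg _)
      nlinarith [mul_le_mul_of_nonneg_left r1 r2.le, mul_le_mul_of_nonneg_right hN' r2.le]
    have p2 : |φ x * s ^ 2 * inner ℝ (gradient φ x) x| ≤ |φ x| * s * g := by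
      rw [abs_mul, abs_mul, abs_of_pos r2]
      calc |φ x| * s ^ 2 * |inner ℝ (gradient φ x) x| ≤ |φ x| * s ^ 2 * (g * ‖x‖) := by gcongr
        _ = |φ x| * s * g * (‖x‖ * s) := by ring
        _ ≤ |φ x| * s * g * 1 := by
          apply mul_le_mul_of_nonneg_left hm; positivity
        _ = _ := by ring
    have p3 := (abs_le.1 p2).1
    have p4 : (s * φ x) ^ 2 = (|φ x| * s) ^ 2 := by rw [mul_pow, mul_pow, sq_abs]; ring
    have p5 : φ x ^ 2 * (3 * s ^ 2) = 3 * (|φ x| * s) ^ 2 := by rw [mul_pow, sq_abs]; ring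
    rw [p4]
    nlinarith [sq_nonneg (3 * (|φ x| * s) - 2 * g)]
  have := integral_mono (by exact (I1.const_mul (3/2)).sub (I2.const_mul (2/3)))
    (integrable_finsetSum _ (fun i _ => int i)) key
  rw [hsum, integral_sub (I1.const_mul _) (I2.const_mul _), integral_const_mul,
    integral_const_mul] at this
  linarith

end PZ

namespace PZ

open scoped Topology ENNReal

variable {N : ℕ}

lemma tendsto_normsq {F : Type*} [NormedAddCommGroup F] [InnerProductSpace ℝ F]
    {f : ℕ → Euc N → F} {f0 : Euc N → F}
    (hf : ∀ n, MemLp (f n) 2 volume) (hf0 : MemLp f0 2 volume)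
    (h1 : Tendsto (fun n => eLpNorm (fun x => f n x - f0 x) 2 volume) atTop (𝓝 0)) :
    Tendsto (fun n => ∫ x, ‖f n x‖ ^ 2) atTop (𝓝 (∫ x, ‖f0 x‖ ^ 2)) := by
  have := tendsto_inner hf hf hf0 hf0 h1 h1
  simpa only [real_inner_self_eq_norm_sq] using this

lemma V.hardy (hN : 5 ≤ N) {u : Euc N → ℝ} {H : Euc N → Euc N} (h : V u H) :
    ∫ x, (sw x * u x) ^ 2 ≤ 4 / 9 * ∫ x, ‖H x‖ ^ 2 := by
  obtain ⟨φ, hφ, h1, h2⟩ := h.ex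
  have t1 := tendsto_normsq (fun n => (hφ n).memLp_sw 2) h.mu h1
  have t2 := tendsto_normsq (fun n => (hφ n).memLp_grad 2) h.mH h2
  simp only [Real.norm_eq_abs, sq_abs] at t1
  exact le_of_tendsto_of_tendsto' t1 (t2.const_mul (4/9)) (fun n => hardy_tst hN (hφ n))

lemma V.ibp {u : Euc N → ℝ} {H : Euc N → Euc N} (h : V u H) {f : Euc N → ℝ}
    (hf : ContDiff ℝ (⊤ : ℕ∞) f) (i : Fin N) {C : ℝ} (hC : ∀ x, |f x| ≤ C * sw x)
    (hC' : ∀ x, |gradient f x i| ≤ C * sw x ^ 2) :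
    ∫ x, (u x ^ 2 * gradient f x i + 2 * (u x * H x i * f x)) = 0 := by
  obtain ⟨φ, hφ, h1, h2⟩ := h.ex
  let m1 : Euc N → ℝ := fun x => gradient f x i / sw x ^ 2
  let m2 : Euc N → ℝ := fun x => 2 * (f x / sw x)
  have b1 : ∀ x, |m1 x| ≤ C := fun x => by
    have := sw_pos x
    simp only [m1, abs_div, abs_pow, abs_of_pos this]
    rw [div_le_iff₀ (by positivity)]; exact hC' x
  have b2 : ∀ x, |m2 x| ≤ 2 * C := fun x => by
    have := sw_pos x
    simp only [m2, abs_div, abs_mul, abs_of_pos this, abs_two]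
    have := (div_le_iff₀ this).2 (hC x)
    linarith
  have swm : AEStronglyMeasurable (sw : Euc N → ℝ) volume := sw_cont.aestronglyMeasurable
  have gi : AEStronglyMeasurable (fun x => gradient f x i) volume :=
    (EuclideanSpace.proj (𝕜 := ℝ) i).continuous.comp_aestronglyMeasurable (gradient_meas f)
  have mm1 : AEStronglyMeasurable m1 volume :=
    (gi.aemeasurable.div (swm.aemeasurable.pow_const 2)).aestronglyMeasurable
  have mm2 : AEStronglyMeasurable m2 volume :=
    ((hf.continuous.aemeasurable.div swm.aemeasurable).const_mul 2).aestronglyMeasurable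
  have key : ∀ (a : Euc N → ℝ) (A : Euc N → Euc N), MemLp (fun x => sw x * a x) 2 volume →
      MemLp A 2 volume → MemLp (fun x => m1 x * (sw x * a x)) 2 volume ∧
        MemLp (fun x => m2 x * A x i) 2 volume := by
    intro a A ha hA
    constructor
    · refine ha.of_le_mul (c := C) (mm1.mul ha.1) (Eventually.of_forall fun x => ?_)
      rw [norm_mul]; exact mul_le_mul_of_nonneg_right (b1 x) (norm_nonneg _)
    · refine hA.of_le_mul (c := 2 * C) (mm2.mul
        ((EuclideanSpace.proj (𝕜 := ℝ) i).continuous.comp_aestronglyMeasurable hA.1))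
        (Eventually.of_forall fun x => ?_)
      rw [norm_mul]
      exact mul_le_mul (b2 x) (PiLp.norm_apply_le _ i) (norm_nonneg _)
        ((abs_nonneg _).trans (b2 x))
  have eq : ∀ (a : Euc N → ℝ) (A : Euc N → Euc N),
      ∫ x, inner ℝ (sw x * a x) (m1 x * (sw x * a x) + m2 x * A x i) =
      ∫ x, (a x ^ 2 * gradient f x i + 2 * (a x * A x i * f x)) := by
    intro a A
    congr 1; funext x
    have := (sw_pos x).ne'
    simp only [m1, m2, RCLike.inner_apply, conj_trivial]
    field_simp
  have t : Tendsto (fun n => eLpNorm (fun x => (m1 x * (sw x * φ n x) + m2 x * gradient (φ n) x i) -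
      (m1 x * (sw x * u x) + m2 x * H x i)) 2 volume) atTop (𝓝 0) := by
    have t1 : Tendsto (fun n => eLpNorm (fun x => m1 x * (sw x * φ n x - sw x * u x)) 2 volume)
        atTop (𝓝 0) := by
      refine tendsto_eLp_bound C (fun n x => ?_) h1
      rw [norm_mul]; exact mul_le_mul_of_nonneg_right (b1 x) (norm_nonneg _)
    have t2 : Tendsto (fun n => eLpNorm (fun x => m2 x * (gradient (φ n) x - H x) i) 2 volume)
        atTop (𝓝 0) := by
      refine tendsto_eLp_bound (2 * C) (fun n x => ?_) h2
      rw [norm_mul]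
      exact mul_le_mul (b2 x) (PiLp.norm_apply_le _ i) (norm_nonneg _)
        ((abs_nonneg _).trans (b2 x))
    have t3 := t1.add t2
    rw [add_zero] at t3
    refine tendsto_of_tendsto_of_tendsto_of_le_of_le tendsto_const_nhds t3
      (fun _ => zero_le) (fun n => ?_)
    have e : (fun x => (m1 x * (sw x * φ n x) + m2 x * gradient (φ n) x i) -
      (m1 x * (sw x * u x) + m2 x * H x i)) = (fun x => m1 x * (sw x * φ n x - sw x * u x)) +
        (fun x => m2 x * (gradient (φ n) x - H x) i) := by
      funext x; simp; ring
    simp only [e]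
    refine eLpNorm_add_le (mm1.mul (((hφ n).memLp_sw 2).1.sub h.mu.1)) (mm2.mul ?_) (by norm_num)
    exact (EuclideanSpace.proj (𝕜 := ℝ) i).continuous.comp_aestronglyMeasurable
      (((hφ n).memLp_grad 2).1.sub h.mH.1)
  have lim := tendsto_inner (fun n => (hφ n).memLp_sw 2)
    (fun n => (key _ _ ((hφ n).memLp_sw 2) ((hφ n).memLp_grad 2)).1.add
      (key _ _ ((hφ n).memLp_sw 2) ((hφ n).memLp_grad 2)).2) h.mu
    ((key _ _ h.mu h.mH).1.add (key _ _ h.mu h.mH).2) h1 t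
  simp only [Pi.add_apply, eq] at lim
  have z : ∀ n, ∫ x, (φ n x ^ 2 * gradient f x i + 2 * (φ n x * gradient (φ n) x i * f x)) = 0 :=
    fun n => (ibp_tst (hφ n) hf i).2
  simp only [z] at lim
  exact (tendsto_nhds_unique lim tendsto_const_nhds)

lemma hardy_eLp (hN : 5 ≤ N) {φ : Euc N → ℝ} (h : Tst φ) :
    eLpNorm (fun x => sw x * φ x) 2 volume ≤ eLpNorm (gradient φ) 2 volume := by
  have h0 := hardy_tst hN h
  have hp : 0 ≤ ∫ x, ‖gradient φ x‖ ^ 2 := integral_nonneg fun x => by positivity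
  rw [(h.memLp_sw 2).eLpNorm_eq_integral_rpow_norm (by norm_num) (by norm_num),
    (h.memLp_grad 2).eLpNorm_eq_integral_rpow_norm (by norm_num) (by norm_num)]
  apply ENNReal.ofReal_le_ofReal
  apply Real.rpow_le_rpow (integral_nonneg fun x => by positivity) _ (by positivity)
  simp only [ENNReal.toReal_ofNat, Real.rpow_ofNat, Real.norm_eq_abs, sq_abs]
  linarith

lemma V_of_memD12 (hN : 5 ≤ N) {w : Euc N → ℝ} (h : MemD12 N w)
    (hm : AEStronglyMeasurable w volume) : V w (gradient w) := by
  obtain ⟨φ, hφ, h1, h2⟩ := h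
  have hφ' : ∀ n, Tst (φ n) := hφ
  have e2 : ∀ n, eLpNorm (fun x => fderiv ℝ w x - fderiv ℝ (φ n) x) 2 volume =
      eLpNorm (fun x => gradient (φ n) x - gradient w x) 2 volume := by
    intro n
    apply eLpNorm_congr_norm_ae
    refine Eventually.of_forall fun x => ?_
    simp only [gradient]
    rw [← map_sub, LinearIsometryEquiv.norm_map, norm_sub_rev]
  simp only [e2] at h2
  have mG : MemLp (gradient w) 2 volume := by
    obtain ⟨n, hn⟩ := (h2.eventually (gt_mem_nhds ENNReal.zero_lt_top)).exists
    have a : MemLp (fun x => gradient (φ n) x - gradient w x) 2 volume :=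
      ⟨((hφ' n).memLp_grad 2).1.sub (gradient_meas w), hn⟩
    have := ((hφ' n).memLp_grad 2).sub a
    refine this.ae_eq (Eventually.of_forall fun x => ?_)
    simp
  have hp0 : ENNReal.ofReal (2 * (N : ℝ) / ((N : ℝ) - 2)) ≠ 0 := by
    have : (5 : ℝ) ≤ N := by exact_mod_cast hN
    rw [Ne, ENNReal.ofReal_eq_zero, not_le]
    apply div_pos <;> linarith
  have tm : TendstoInMeasure volume φ atTop w := by
    refine tendstoInMeasure_of_tendsto_eLpNorm hp0
      (fun n => (hφ' n).1.continuous.aestronglyMeasurable) hm ?_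
    refine h1.congr fun n => ?_
    apply eLpNorm_congr_norm_ae
    exact Eventually.of_forall fun x => norm_sub_rev _ _
  obtain ⟨ns, hns, hae⟩ := tm.exists_seq_tendsto_ae
  have bd : ∀ n, eLpNorm (fun x => sw x * φ n x - sw x * w x) 2 volume ≤
      eLpNorm (fun x => gradient (φ n) x - gradient w x) 2 volume := by
    intro n
    have l1 := Lp.eLpNorm_lim_le_liminf_eLpNorm (p := 2) (μ := (volume : Measure (Euc N)))
      (f := fun j x => sw x * φ n x - sw x * φ (ns j) x)
      (fun j => ((hφ' n).memLp_sw 2).1.sub ((hφ' (ns j)).memLp_sw 2).1)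
      (fun x => sw x * φ n x - sw x * w x) (by
        filter_upwards [hae] with x hx
        exact tendsto_const_nhds.sub (hx.const_mul _))
    refine l1.trans ?_
    have l2 : ∀ j, eLpNorm (fun x => sw x * φ n x - sw x * φ (ns j) x) 2 volume ≤
        eLpNorm (fun x => gradient (φ n) x - gradient w x) 2 volume +
        eLpNorm (fun x => gradient (φ (ns j)) x - gradient w x) 2 volume := by
      intro j
      have a1 := hardy_eLp hN ((hφ' n).sub (hφ' (ns j)))
      have a2 : gradient (fun x => φ n x - φ (ns j) x) =
          (fun x => gradient (φ n) x - gradient w x) -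
            (fun x => gradient (φ (ns j)) x - gradient w x) := by
        funext x
        rw [gradient_sub ((hφ' n).diff x) ((hφ' (ns j)).diff x)]
        simp
      rw [a2] at a1
      simp only [mul_sub] at a1
      exact a1.trans (eLpNorm_sub_le (((hφ' n).memLp_grad 2).1.sub (gradient_meas w))
        (((hφ' (ns j)).memLp_grad 2).1.sub (gradient_meas w)) (by norm_num))
    have l3 : Tendsto (fun j => eLpNorm (fun x => gradient (φ n) x - gradient w x) 2 volume +
        eLpNorm (fun x => gradient (φ (ns j)) x - gradient w x) 2 volume) atTop
        (𝓝 (eLpNorm (fun x => gradient (φ n) x - gradient w x) 2 volume + 0)) :=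
      tendsto_const_nhds.add (h2.comp hns.tendsto_atTop)
    rw [add_zero] at l3
    rw [← l3.liminf_eq]
    exact liminf_le_liminf (Eventually.of_forall l2)
  have lim : Tendsto (fun n => eLpNorm (fun x => sw x * φ n x - sw x * w x) 2 volume)
      atTop (𝓝 0) :=
    tendsto_of_tendsto_of_tendsto_of_le_of_le tendsto_const_nhds h2 (fun _ => zero_le) bd
  refine ⟨?_, mG, φ, hφ', lim, h2⟩
  obtain ⟨n, hn⟩ := (lim.eventually (gt_mem_nhds ENNReal.zero_lt_top)).exists
  have a : MemLp (fun x => sw x * φ n x - sw x * w x) 2 volume :=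
    ⟨((hφ' n).memLp_sw 2).1.sub (sw_cont.aestronglyMeasurable.mul hm), hn⟩
  have := ((hφ' n).memLp_sw 2).sub a
  refine this.ae_eq (Eventually.of_forall fun x => ?_)
  simp

end PZ

namespace PZ

open scoped Topology ENNReal

variable {N k : ℕ} {σ : ℝ}

lemma zNorm_cont : Continuous (zNorm N k) := by
  unfold zNorm
  refine Real.continuous_sqrt.comp (continuous_finsetSum _ fun i _ => ?_)
  have := (coord_smooth i).continuous
  split_ifs
  · exact this.pow 2
  · exact continuous_const

lemma zNorm_nonneg (x : Euc N) : 0 ≤ zNorm N k x := Real.sqrt_nonneg _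

lemma zNorm_sq (x : Euc N) :
    zNorm N k x ^ 2 = ∑ i : Fin N, if k ≤ (i : ℕ) then (x i) ^ 2 else 0 := by
  unfold zNorm
  rw [Real.sq_sqrt]
  exact Finset.sum_nonneg fun i _ => by split_ifs <;> positivity

lemma coord_le_zNorm (x : Euc N) (i : Fin N) (hi : k ≤ (i : ℕ)) : |x i| ≤ zNorm N k x := by
  rw [← abs_of_nonneg (zNorm_nonneg x)]
  apply sq_le_sq.1
  rw [zNorm_sq]
  have := Finset.single_le_sum (f := fun i : Fin N => if k ≤ (i : ℕ) then (x i) ^ 2 else 0)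
    (fun i _ => by split_ifs <;> positivity) (Finset.mem_univ i)
  simpa [hi] using this

lemma zNorm_le (x : Euc N) : zNorm N k x ≤ ‖x‖ := by
  rw [EuclideanSpace.norm_eq]
  unfold zNorm
  apply Real.sqrt_le_sqrt
  apply Finset.sum_le_sum
  intro i _
  simp only [Real.norm_eq_abs, sq_abs]
  split_ifs
  · rfl
  · positivity

lemma coord_ne_ae (i : Fin N) : ∀ᵐ x : Euc N, x i ≠ 0 := by
  have h1 : MeasurePreserving (fun x : Euc N => (fun j => x j)) volume volume :=
    EuclideanSpace.volume_preserving_symm_measurableEquiv_toLp (Fin N) 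
  have h2 : Measure.QuasiMeasurePreserving (fun x : Fin N → ℝ => x i) volume volume :=
    Measure.quasiMeasurePreserving_eval _ i
  have h3 : ∀ᵐ t : ℝ, t ≠ 0 := by
    simp [ae_iff]
  exact h1.quasiMeasurePreserving.ae (h2.ae h3)

lemma zNorm_pos_ae (hk : k + 2 ≤ N) : ∀ᵐ x : Euc N, 0 < zNorm N k x := by
  filter_upwards [coord_ne_ae (⟨k, by omega⟩ : Fin N)] with x hx
  exact (abs_pos.2 hx).trans_le (coord_le_zNorm x ⟨k, by omega⟩ le_rfl)

lemma one_dim (R : ℝ) (hσ : σ < 2) :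
    Integrable (fun t : ℝ => (Icc (-R) R).indicator (fun t => |t| ^ (-(σ / 2))) t) := by
  rw [integrable_indicator_iff measurableSet_Icc]
  have h1 : IntegrableOn (fun t : ℝ => |t| ^ (-(σ / 2))) (Icc 0 |R|) := by
    have := (intervalIntegral.intervalIntegrable_rpow' (a := 0) (b := |R|)
      (r := -(σ / 2)) (by linarith))
    rw [intervalIntegrable_iff_integrableOn_Icc_of_le (abs_nonneg R)] at this
    refine this.congr_fun (fun t ht => ?_) measurableSet_Icc
    simp only [abs_of_nonneg ht.1]
  have h2 : IntegrableOn (fun t : ℝ => |t| ^ (-(σ / 2))) (Icc (-|R|) 0) := by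
    have := h1.comp_neg
    simpa using this
  refine (h2.union h1).mono_set ?_
  intro t ht
  have := le_abs_self R
  rcases le_total t 0 with h | h
  · left; exact ⟨by linarith [ht.1], h⟩
  · right; exact ⟨h, by linarith [ht.2]⟩

lemma local_int (hk : k + 2 ≤ N) (h0 : 0 < σ) (hσ : σ < 2) (R : ℝ) :
    Integrable (fun x : Euc N => (closedBall (0 : Euc N) R).indicator
      (fun x => zNorm N k x ^ (-σ)) x) := by
  let a : Fin N := ⟨k, by omega⟩
  let b : Fin N := ⟨k + 1, by omega⟩
  have hab : a ≠ b := by simp [a, b]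
  let F : Fin N → ℝ → ℝ := fun i t => (Icc (-R) R).indicator
    (fun t => if i = a ∨ i = b then |t| ^ (-(σ / 2)) else 1) t
  have hF : ∀ i, Integrable (F i) := by
    intro i
    by_cases hi : i = a ∨ i = b
    · simpa [F, hi] using one_dim R hσ
    · simp only [F, hi, if_false]
      rw [integrable_indicator_iff measurableSet_Icc]
      simp
  have hP : Integrable (fun x : Fin N → ℝ => ∏ i, F i (x i)) :=
    Integrable.fintype_prod (f := F) hF
  have h1 : MeasurePreserving (fun x : Euc N => (fun j => x j)) volume volume :=
    EuclideanSpace.volume_preserving_symm_measurableEquiv_toLp (Fin N)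
  have hQ : Integrable (fun x : Euc N => ∏ i, F i (x i)) := h1.integrable_comp_of_integrable hP
  refine hQ.mono' ?_ ?_
  · have m : Measurable (zNorm N k) := zNorm_cont.measurable
    exact (Measurable.indicator (m.pow_const _) measurableSet_closedBall).aestronglyMeasurable
  · filter_upwards [coord_ne_ae a, coord_ne_ae b] with x ha hb
    have hFn : ∀ i t, 0 ≤ F i t := by
      intro i t
      apply indicator_nonneg
      intro t _
      split_ifs <;> positivity
    by_cases hx : x ∈ closedBall (0 : Euc N) R
    · rw [indicator_of_mem hx, Real.norm_of_nonneg (Real.rpow_nonneg (zNorm_nonneg x) _)]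
      have hxi : ∀ i, x i ∈ Icc (-R) R := fun i => by
        have h := abs_coord_le x i
        rw [mem_closedBall_zero_iff] at hx
        exact abs_le.1 (h.trans hx)
      have e : ∏ i, F i (x i) = |x a| ^ (-(σ / 2)) * |x b| ^ (-(σ / 2)) := by
        simp only [F, indicator_of_mem (hxi _)]
        rw [← Finset.prod_subset (Finset.subset_univ {a, b})]
        · rw [Finset.prod_pair hab]; simp
        · intro i _ hi
          simp only [Finset.mem_insert, Finset.mem_singleton] at hi
          simp [hi]
      rw [e]
      have pa := abs_pos.2 ha
      have pb := abs_pos.2 hb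
      have la := coord_le_zNorm (k := k) x a le_rfl
      have lb := coord_le_zNorm (k := k) x b (by simp [b])
      have hz : 0 < zNorm N k x := pa.trans_le la
      have : zNorm N k x ^ (-σ) = zNorm N k x ^ (-(σ / 2)) * zNorm N k x ^ (-(σ / 2)) := by
        rw [← Real.rpow_add hz]; congr 1; ring
      rw [this]
      apply mul_le_mul
      · exact Real.rpow_le_rpow_of_nonpos pa la (by linarith)
      · exact Real.rpow_le_rpow_of_nonpos pb lb (by linarith)
      · positivity
      · positivity
    · rw [indicator_of_notMem hx, norm_zero]
      exact Finset.prod_nonneg fun i _ => hFn i _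

lemma tst_int (hk : k + 2 ≤ N) (h0 : 0 < σ) (hσ : σ < 2) {q : ℝ} (hq : 0 < q) {φ : Euc N → ℝ}
    (h : Tst φ) : Integrable (fun x => zNorm N k x ^ (-σ) * |φ x| ^ q) := by
  obtain ⟨R, hR⟩ := h.2.isCompact.isBounded.subset_closedBall (0 : Euc N)
  obtain ⟨M, hM⟩ := h.1.continuous.bounded_above_of_compact_support h.2
  refine ((local_int hk h0 hσ R).mul_const (M ^ q)).mono' ?_ (Eventually.of_forall fun x => ?_)
  · have m : Measurable (zNorm N k) := zNorm_cont.measurable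
    have m' : Measurable φ := h.1.continuous.measurable
    exact ((m.pow_const _).mul (m'.norm.pow_const q)).aestronglyMeasurable
  · have z := Real.rpow_nonneg (zNorm_nonneg (k := k) x) (-σ)
    by_cases hx : x ∈ closedBall (0 : Euc N) R
    · rw [indicator_of_mem hx, Real.norm_of_nonneg (by positivity)]
      gcongr
      exact hM x
    · have : φ x = 0 := by
        by_contra hne
        exact hx (hR (subset_tsupport _ hne))
      rw [indicator_of_notMem hx, this, abs_zero, Real.zero_rpow hq.ne']
      simp

lemma q_gt (hN : 5 ≤ N) (hσ : σ < 2) : 2 < twoStar N σ := by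
  have : (5 : ℝ) ≤ N := by exact_mod_cast hN
  unfold twoStar
  rw [lt_div_iff₀ (by linarith)]
  linarith

lemma hs_tst (hN : 5 ≤ N) (hσ : σ < 2) {φ : Euc N → ℝ} (h : Tst φ) :
    Sconst N k σ * hsInt N k σ φ ^ (2 / twoStar N σ) ≤ ∫ x, ‖gradient φ x‖ ^ 2 := by
  have hq := q_gt hN hσ
  set q := twoStar N σ with hqdef
  have hn : 0 ≤ hsInt N k σ φ := integral_nonneg fun x =>
    mul_nonneg (Real.rpow_nonneg (zNorm_nonneg x) _) (by positivity)
  have hg : 0 ≤ ∫ x, ‖gradient φ x‖ ^ 2 := integral_nonneg fun x => by positivity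
  rcases hn.eq_or_lt with h0 | hpos
  · rw [← h0, Real.zero_rpow (by positivity), mul_zero]; exact hg
  set m := hsInt N k σ φ with hm
  let c : ℝ := m ^ (-(1 / q))
  have hc : 0 < c := by positivity
  have hT : Tst (fun x => c * φ x) := h.smooth_mul contDiff_const
  have e1 : hsInt N k σ (fun x => c * φ x) = 1 := by
    have : hsInt N k σ (fun x => c * φ x) = c ^ q * m := by
      rw [hm]; unfold hsInt
      rw [← integral_const_mul]
      congr 1; funext x
      rw [abs_mul, abs_of_pos hc, Real.mul_rpow hc.le (abs_nonneg _)]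
      ring
    rw [this]
    simp only [c]
    rw [← Real.rpow_mul hpos.le, neg_mul, one_div, inv_mul_cancel₀ (by positivity),
      Real.rpow_neg_one, inv_mul_cancel₀ hpos.ne']
  have e2 : gradL2 N (fun x => c * φ x) = c ^ 2 * ∫ x, ‖gradient φ x‖ ^ 2 := by
    unfold gradL2
    rw [← integral_const_mul]
    congr 1; funext x
    rw [fderiv_const_mul (h.diff x), norm_smul, mul_pow, norm_gradient, Real.norm_eq_abs, sq_abs]
  have le : Sconst N k σ ≤ c ^ 2 * ∫ x, ‖gradient φ x‖ ^ 2 := by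
    rw [← e2]
    apply csInf_le
    · refine ⟨0, ?_⟩
      rintro s ⟨v, -, -, rfl⟩
      exact integral_nonneg fun x => by positivity
    · refine ⟨_, ⟨fun _ => _, fun _ => hT, ?_, ?_⟩, e1, rfl⟩
      · simp
      · have z : eLpNorm (fun _ : Euc N => (0 : Euc N →L[ℝ] ℝ)) 2 volume = 0 := by
          rw [eLpNorm_congr_norm_ae (g := fun _ : Euc N => (0 : ℝ))
            (Eventually.of_forall fun x => by simp)]
          simp
        simp only [sub_self]
        rw [z]
        exact tendsto_const_nhds
  have e3 : c ^ 2 * m ^ (2 / q) = 1 := by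
    simp only [c]
    rw [← Real.rpow_natCast, ← Real.rpow_mul hpos.le, ← Real.rpow_add hpos]
    have : -(1 / q) * ((2:ℕ):ℝ) + 2 / q = 0 := by push_cast; ring
    rw [this, Real.rpow_zero]
  calc Sconst N k σ * m ^ (2 / q) ≤ (c ^ 2 * ∫ x, ‖gradient φ x‖ ^ 2) * m ^ (2 / q) := by gcongr
    _ = (c ^ 2 * m ^ (2 / q)) * ∫ x, ‖gradient φ x‖ ^ 2 := by ring
    _ = _ := by rw [e3, one_mul]

lemma V.hs (hN : 5 ≤ N) (hk : k + 2 ≤ N) (h0 : 0 < σ) (hσ : σ < 2) {u : Euc N → ℝ}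
    {H : Euc N → Euc N} (h : V u H) :
    Sconst N k σ * hsInt N k σ u ^ (2 / twoStar N σ) ≤ ∫ x, ‖H x‖ ^ 2 := by
  have hq := q_gt hN hσ
  obtain ⟨φ, hφ, h1, h2⟩ := h.ex
  have hb : 0 ≤ ∫ x, ‖H x‖ ^ 2 := integral_nonneg fun x => by positivity
  have hn : ∀ v, 0 ≤ hsInt N k σ v := fun v => integral_nonneg fun x =>
    mul_nonneg (Real.rpow_nonneg (zNorm_nonneg x) _) (by positivity)
  rcases le_or_gt (Sconst N k σ) 0 with hS | hS
  · exact (mul_nonpos_of_nonpos_of_nonneg hS (Real.rpow_nonneg (hn u) _)).trans hb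
  set q := twoStar N σ with hqdef
  set S := Sconst N k σ with hSdef
  have t2 := tendsto_normsq (fun n => (hφ n).memLp_grad 2) h.mH h2
  have tm : TendstoInMeasure volume (fun n x => sw x * φ n x) atTop (fun x => sw x * u x) :=
    tendstoInMeasure_of_tendsto_eLpNorm (by norm_num) (fun n => ((hφ n).memLp_sw 2).1) h.mu.1 h1
  obtain ⟨ns, hns, hae⟩ := tm.exists_seq_tendsto_ae
  have mz : Measurable (zNorm N k) := zNorm_cont.measurable
  let T : (Euc N → ℝ) → Euc N → ℝ≥0∞ := fun v x => ENNReal.ofReal (zNorm N k x ^ (-σ) * |v x| ^ q)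
  have mT : ∀ v : Euc N → ℝ, AEMeasurable v volume → AEMeasurable (fun x =>
      zNorm N k x ^ (-σ) * |v x| ^ q) volume := fun v hv =>
    (mz.pow_const _).aemeasurable.mul (hv.norm.pow_const q)
  have fat : ∫⁻ x, T u x ≤ liminf (fun j => ∫⁻ x, T (φ (ns j)) x) atTop := by
    have e : ∫⁻ x, T u x = ∫⁻ x, liminf (fun j => T (φ (ns j)) x) atTop := by
      apply lintegral_congr_ae
      filter_upwards [hae] with x hx
      symm
      apply Tendsto.liminf_eq
      have hx' : Tendsto (fun j => φ (ns j) x) atTop (𝓝 (u x)) := by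
        have := hx.const_mul (sw x)⁻¹
        have hs := (sw_pos x).ne'
        simpa [← mul_assoc, inv_mul_cancel₀ hs] using this
      apply ENNReal.tendsto_ofReal
      apply Tendsto.const_mul
      exact hx'.abs.rpow_const (Or.inr (by linarith))
    rw [e]
    exact lintegral_liminf_le' fun j =>
      (mT _ (hφ (ns j)).1.continuous.aemeasurable).ennreal_ofReal
  have bd : ∀ n, ∫⁻ x, T (φ n) x ≤
      ENNReal.ofReal (((∫ x, ‖gradient (φ n) x‖ ^ 2) / S) ^ (q / 2)) := by
    intro n
    rw [← ofReal_integral_eq_lintegral_ofReal (tst_int hk h0 hσ (by linarith) (hφ n))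
      (Eventually.of_forall fun x => mul_nonneg (Real.rpow_nonneg (zNorm_nonneg x) _)
        (by positivity))]
    apply ENNReal.ofReal_le_ofReal
    have a := hs_tst (k := k) hN hσ (hφ n)
    change hsInt N k σ (φ n) ≤ _
    have a' : hsInt N k σ (φ n) ^ (2 / q) ≤ (∫ x, ‖gradient (φ n) x‖ ^ 2) / S := by
      rw [le_div_iff₀ hS, mul_comm]; exact a
    have := Real.rpow_le_rpow (Real.rpow_nonneg (hn _) _) a' (by positivity : 0 ≤ q / 2)
    rw [← Real.rpow_mul (hn _)] at this
    have e : 2 / q * (q / 2) = 1 := by field_simp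
    rwa [e, Real.rpow_one] at this
  have lim : Tendsto (fun j => ENNReal.ofReal (((∫ x, ‖gradient (φ (ns j)) x‖ ^ 2) / S) ^ (q / 2)))
      atTop (𝓝 (ENNReal.ofReal (((∫ x, ‖H x‖ ^ 2) / S) ^ (q / 2)))) := by
    apply ENNReal.tendsto_ofReal
    exact ((t2.comp hns.tendsto_atTop).div_const S).rpow_const (Or.inr (by positivity))
  have fin : ∫⁻ x, T u x ≤ ENNReal.ofReal (((∫ x, ‖H x‖ ^ 2) / S) ^ (q / 2)) := by
    refine fat.trans ?_
    rw [← lim.liminf_eq]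
    exact liminf_le_liminf (Eventually.of_forall fun j => bd (ns j))
  have main : hsInt N k σ u ≤ ((∫ x, ‖H x‖ ^ 2) / S) ^ (q / 2) := by
    unfold hsInt
    rw [integral_eq_lintegral_of_nonneg_ae (Eventually.of_forall fun x =>
      mul_nonneg (Real.rpow_nonneg (zNorm_nonneg x) _) (by positivity))
      (mT u h.meas.aemeasurable).aestronglyMeasurable]
    exact ENNReal.toReal_le_of_le_ofReal (by positivity) fin
  have := Real.rpow_le_rpow (hn u) main (by positivity : 0 ≤ 2 / q)
  rw [← Real.rpow_mul (by positivity)] at this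
  have e : q / 2 * (2 / q) = 1 := by field_simp
  rw [e, Real.rpow_one, le_div_iff₀ hS] at this
  linarith

end PZ

namespace PZ

open scoped Topology ENNReal

variable {N k : ℕ} {σ : ℝ}

lemma int_inner {f g : Euc N → Euc N} (hf : MemLp f 2 volume) (hg : MemLp g 2 volume) :
    Integrable (fun x => inner ℝ (f x) (g x)) := by
  refine ((hf.integrable_norm_pow (p := 2) (by simp)).add
    (hg.integrable_norm_pow (p := 2) (by simp))).mono' (hf.1.inner hg.1)
    (Eventually.of_forall fun x => ?_)
  refine (norm_inner_le_norm (f x) (g x)).trans ?_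
  simp only [Pi.add_apply]
  nlinarith [sq_nonneg (‖f x‖ - ‖g x‖), norm_nonneg (f x), norm_nonneg (g x)]

/-- the density `|z|^{-σ} w^q` -/
def Wd (k : ℕ) (σ : ℝ) (w : Euc N → ℝ) (x : Euc N) : ℝ :=
  zNorm N k x ^ (-σ) * w x ^ twoStar N σ

structure GSd (N k : ℕ) (σ : ℝ) (w : Euc N → ℝ) (G : Euc N → Euc N) : Prop where
  hN : 5 ≤ N
  hk : k + 2 ≤ N
  h0 : 0 < σ
  hσ : σ < 2
  hV : V w G
  pos : ∀ x, 0 < w x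
  hW : Integrable (Wd k σ w)
  hW1 : ∫ x, Wd k σ w x = 1
  hS : ∫ x, ‖G x‖ ^ 2 = Sconst N k σ

lemma Wd_nonneg {w : Euc N → ℝ} (hw : ∀ x, 0 < w x) (x : Euc N) : 0 ≤ Wd k σ w x :=
  mul_nonneg (Real.rpow_nonneg (zNorm_nonneg x) _) (Real.rpow_nonneg (hw x).le _)

lemma gsd_of (hN : 5 ≤ N) (hk : k + 2 ≤ N) (h0 : 0 < σ) (hσ : σ < 2) {w : Euc N → ℝ}
    (hw : GroundState N k σ w) : GSd N k σ w (gradient w) := by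
  obtain ⟨hD, pos, h1, h2⟩ := hw
  have e : (fun x => zNorm N k x ^ (-σ) * |w x| ^ twoStar N σ) = Wd k σ w := by
    funext x; simp only [Wd, abs_of_pos (pos x)]
  have hW1 : ∫ x, Wd k σ w x = 1 := by rw [← e]; exact h1
  have hW : Integrable (Wd k σ w) := by
    by_contra hc
    rw [integral_undef hc] at hW1
    exact zero_ne_one hW1
  have hq := q_gt hN hσ
  have hm : AEStronglyMeasurable w volume := by
    have mz : Measurable (zNorm N k) := zNorm_cont.measurable
    have m1 : AEMeasurable (fun x => (zNorm N k x ^ σ * Wd k σ w x) ^ (1 / twoStar N σ)) volume :=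
      ((mz.pow_const σ).aemeasurable.mul hW.1.aemeasurable).pow_const _
    refine (m1.congr ?_).aestronglyMeasurable
    filter_upwards [zNorm_pos_ae hk] with x hx
    have : zNorm N k x ^ σ * Wd k σ w x = w x ^ twoStar N σ := by
      rw [Wd, ← mul_assoc, ← Real.rpow_add hx]; simp
    rw [this, ← Real.rpow_mul (pos x).le, mul_one_div_cancel (by linarith), Real.rpow_one]
  refine ⟨hN, hk, h0, hσ, V_of_memD12 hN hD hm, pos, hW, hW1, ?_⟩
  rw [← h2, gradL2]
  simp only [norm_gradient]

lemma gradient_one_add {h : Euc N → ℝ} (hh : ContDiff ℝ (⊤ : ℕ∞) h) {a : ℝ} (t : ℝ) (x : Euc N) :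
    gradient (fun y => a + t * h y) x = t • gradient h x := by
  have hd : DifferentiableAt ℝ h x := hh.differentiable (by simp) x
  have : HasFDerivAt (fun y => a + t * h y) (t • fderiv ℝ h x) x :=
    (hd.hasFDerivAt.const_mul t).const_add a
  unfold gradient
  rw [this.fderiv]
  simp

lemma GSd.EL {w : Euc N → ℝ} {G : Euc N → Euc N} (d : GSd N k σ w G) {h : Euc N → ℝ} {C : ℝ}
    (hh : ContDiff ℝ (⊤ : ℕ∞) h) (hC : ∀ x, |h x| ≤ C) (hC' : ∀ x, ‖gradient h x‖ ≤ C * sw x) :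
    ∫ x, inner ℝ (G x) (h x • G x + w x • gradient h x) =
      Sconst N k σ * ∫ x, Wd k σ w x * h x := by
  set q := twoStar N σ with hqd
  set S := Sconst N k σ with hSd
  have hq : 2 < q := q_gt d.hN d.hσ
  have hC0 : 0 ≤ C := (abs_nonneg _).trans (hC 0)
  set K : Euc N → Euc N := fun x => h x • G x + w x • gradient h x with hK
  have mK : MemLp K 2 volume := (d.hV.mul hh hC hC').mH
  have mG := d.hV.mH
  set b := ∫ x, inner ℝ (G x) (K x) with hb
  set c := ∫ x, ‖K x‖ ^ 2 with hc
  have IWh : Integrable (fun x => Wd k σ w x * h x) :=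
    d.hW.mul_bdd (c := C) hh.continuous.aestronglyMeasurable (Eventually.of_forall hC)
  set a := ∫ x, Wd k σ w x * h x with ha
  have hS0 : 0 ≤ S := by
    rw [hSd, ← d.hS]; exact integral_nonneg fun x => by positivity
  have key : ∀ t : ℝ, |t| * C ≤ 1 → 0 ≤ 1 + q * (t * a) →
      S * (1 + q * (t * a)) ^ (2 / q) ≤ S + 2 * t * b + t ^ 2 * c := by
    intro t ht ht2
    have hsm : ContDiff ℝ (⊤ : ℕ∞) (fun x => 1 + t * h x) :=
      contDiff_const.add (contDiff_const.mul hh)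
    have tb : ∀ x, |t * h x| ≤ |t| * C := fun x => by
      rw [abs_mul]; gcongr; exact hC x
    have hv := d.hV.mul (C := 1 + |t| * C) hsm
      (fun x => by
        refine (abs_add_le _ _).trans ?_
        rw [abs_one]; linarith [tb x])
      (fun x => by
        rw [gradient_one_add hh, norm_smul, Real.norm_eq_abs]
        have := mul_le_mul_of_nonneg_left (hC' x) (abs_nonneg t)
        nlinarith [sw_pos x])
    have hs := hv.hs (k := k) d.hN d.hk d.h0 d.hσ
    have e1 : ∫ x, ‖(1 + t * h x) • G x + w x • gradient (fun x => 1 + t * h x) x‖ ^ 2 =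
        S + 2 * t * b + t ^ 2 * c := by
      have : ∀ x, ‖(1 + t * h x) • G x + w x • gradient (fun x => 1 + t * h x) x‖ ^ 2 =
          ‖G x‖ ^ 2 + 2 * t * inner ℝ (G x) (K x) + t ^ 2 * ‖K x‖ ^ 2 := by
        intro x
        have : (1 + t * h x) • G x + w x • gradient (fun x => 1 + t * h x) x = G x + t • K x := by
          rw [gradient_one_add hh, hK]; module
        rw [this, norm_add_sq_real, inner_smul_right, norm_smul, mul_pow, Real.norm_eq_abs, sq_abs]
        ring
      simp only [this]
      have i1 := mG.integrable_norm_pow (p := 2) (by simp)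
      have i2 := (int_inner mG mK).const_mul (2 * t)
      have i3 := (mK.integrable_norm_pow (p := 2) (by simp)).const_mul (t ^ 2)
      have := integral_add (i1.add i2) i3
      simp only [Pi.add_apply] at this
      rw [this, integral_add i1 i2, integral_const_mul, integral_const_mul, d.hS]
    rw [e1] at hs
    refine le_trans ?_ hs
    refine mul_le_mul_of_nonneg_left ?_ hS0
    refine Real.rpow_le_rpow ht2 ?_ (by positivity)
    have e2 : ∀ x, zNorm N k x ^ (-σ) * |(1 + t * h x) * w x| ^ q =
        Wd k σ w x * (1 + t * h x) ^ q := by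
      intro x
      have h1 : 0 ≤ 1 + t * h x := by have := neg_abs_le (t * h x); linarith [tb x]
      rw [abs_of_nonneg (mul_nonneg h1 (d.pos x).le), Real.mul_rpow h1 (d.pos x).le, Wd]
      ring
    unfold hsInt
    simp only [← hqd, e2]
    have e3 : 1 + q * (t * a) = ∫ x, (Wd k σ w x + q * t * (Wd k σ w x * h x)) := by
      rw [integral_add d.hW (IWh.const_mul _), integral_const_mul, d.hW1, ha]; ring
    rw [e3]
    refine integral_mono (d.hW.add (IWh.const_mul _)) ?_ ?_
    · refine d.hW.mul_bdd (c := 2 ^ q) ?_ (Eventually.of_forall fun x => ?_)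
      · exact (hsm.continuous.measurable.pow_const q).aestronglyMeasurable
      · have h1 : 0 ≤ 1 + t * h x := by have := neg_abs_le (t * h x); linarith [tb x]
        rw [Real.norm_eq_abs, abs_of_nonneg (Real.rpow_nonneg h1 _)]
        refine Real.rpow_le_rpow h1 ?_ (by linarith)
        linarith [le_abs_self (t * h x), tb x]
    · intro x
      have h1 : -1 ≤ t * h x := by have := neg_abs_le (t * h x); linarith [tb x]
      have := one_add_mul_self_le_rpow_one_add h1 (p := q) (by linarith)
      have := mul_le_mul_of_nonneg_left this (Wd_nonneg (k := k) (σ := σ) d.pos x)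
      simp only
      linarith
  let g : ℝ → ℝ := fun t => S + 2 * t * b + t ^ 2 * c - S * (1 + q * (t * a)) ^ (2 / q)
  have hmin : IsLocalMin g 0 := by
    have c1 : ∀ᶠ t : ℝ in 𝓝 0, |t| * C < 1 := by
      have : Tendsto (fun t : ℝ => |t| * C) (𝓝 0) (𝓝 (|0| * C)) :=
        (continuous_abs.mul continuous_const).tendsto 0
      rw [abs_zero, zero_mul] at this
      exact this.eventually (gt_mem_nhds one_pos)
    have c2 : ∀ᶠ t : ℝ in 𝓝 0, 0 < 1 + q * (t * a) := by
      have : Tendsto (fun t : ℝ => 1 + q * (t * a)) (𝓝 0) (𝓝 (1 + q * (0 * a))) :=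
        (by fun_prop : Continuous (fun t : ℝ => 1 + q * (t * a))).tendsto 0
      rw [zero_mul, mul_zero, add_zero] at this
      exact this.eventually (lt_mem_nhds one_pos)
    filter_upwards [c1, c2] with t h1 h2
    have := key t h1.le h2.le
    simp only [g]
    simp
    linarith
  have hder : HasDerivAt g (2 * b - S * (2 * a)) 0 := by
    have d1 : HasDerivAt (fun t : ℝ => 1 + q * (t * a)) (q * (1 * a)) 0 :=
      (((hasDerivAt_id (0:ℝ)).mul_const a).const_mul q).const_add 1
    have d2 := (d1.rpow_const (p := 2 / q) (Or.inl (by simp))).const_mul S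
    have d3 : HasDerivAt (fun t : ℝ => S + 2 * t * b + t ^ 2 * c)
        (2 * 1 * b + (2 * (0:ℝ) ^ (2 - 1) * 1) * c) 0 :=
      ((((hasDerivAt_id (0:ℝ)).const_mul 2).mul_const b).const_add S).add
        (((hasDerivAt_id (0:ℝ)).pow 2).mul_const c)
    refine (d3.sub d2).congr_deriv ?_
    have : q ≠ 0 := by linarith
    simp
    field_simp
    simp
  have := hmin.hasDerivAt_eq_zero hder
  linarith

end PZ

namespace PZ

open scoped Topology ENNReal

variable {N k : ℕ} {σ : ℝ}

lemma fatou_int {F : ℕ → Euc N → ℝ} {f : Euc N → ℝ} {M : ℝ} (hF : ∀ n, Integrable (F n))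
    (h0 : ∀ n x, 0 ≤ F n x) (hM : ∀ n, ∫ x, F n x ≤ M)
    (ht : ∀ x, Tendsto (fun n => F n x) atTop (𝓝 (f x))) : Integrable f := by
  have hf0 : ∀ x, 0 ≤ f x := fun x => ge_of_tendsto' (ht x) (fun n => h0 n x)
  have hm : AEStronglyMeasurable f volume :=
    aestronglyMeasurable_of_tendsto_ae atTop (fun n => (hF n).1) (Eventually.of_forall ht)
  refine ⟨hm, ?_⟩
  rw [hasFiniteIntegral_iff_ofReal (Eventually.of_forall hf0)]
  have e : ∫⁻ x, ENNReal.ofReal (f x) =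
      ∫⁻ x, liminf (fun n => ENNReal.ofReal (F n x)) atTop := by
    apply lintegral_congr
    intro x
    exact ((ENNReal.tendsto_ofReal (ht x)).liminf_eq).symm
  rw [e]
  refine lt_of_le_of_lt (lintegral_liminf_le' fun n => (hF n).1.aemeasurable.ennreal_ofReal) ?_
  refine lt_of_le_of_lt (b := ENNReal.ofReal M) ?_ ENNReal.ofReal_lt_top
  refine (liminf_le_liminf (v := fun _ => ENNReal.ofReal M)
    (Eventually.of_forall fun n => ?_)).trans_eq (by simp)
  rw [← ofReal_integral_eq_lintegral_ofReal (hF n) (Eventually.of_forall (h0 n))]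
  exact ENNReal.ofReal_le_ofReal (hM n)

lemma holder_aux {μ : Measure (Euc N)} {W η : Euc N → ℝ} {q C : ℝ} (hq : 2 < q)
    (hW : Integrable W μ) (hW0 : ∀ x, 0 ≤ W x) (hη : Continuous η) (h0 : ∀ x, 0 ≤ η x)
    (hC : ∀ x, η x ≤ C) :
    ∫ x, W x * η x ^ 2 ∂μ ≤
      (∫ x, W x ∂μ) ^ ((q - 2) / q) * (∫ x, W x * η x ^ q ∂μ) ^ (2 / q) := by
  have hq2 : 0 < q - 2 := by linarith
  have hq0 : 0 < q := by linarith
  have hc : (q / (q - 2)).HolderConjugate (q / 2) := by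
    rw [Real.holderConjugate_iff]
    refine ⟨?_, ?_⟩
    · rw [one_lt_div hq2]; linarith
    · field_simp; ring
  have mW := hW.1.aemeasurable
  have IWq : Integrable (fun x => W x * η x ^ q) μ := by
    refine hW.mul_bdd (c := C ^ q) (hη.measurable.pow_const q).aestronglyMeasurable
      (Eventually.of_forall fun x => ?_)
    rw [Real.norm_eq_abs, abs_of_nonneg (Real.rpow_nonneg (h0 x) _)]
    exact Real.rpow_le_rpow (h0 x) (hC x) hq0.le
  have ef : ∀ x, (W x ^ ((q - 2) / q)) ^ (q / (q - 2)) = W x := fun x => by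
    rw [← Real.rpow_mul (hW0 x)]
    have : (q - 2) / q * (q / (q - 2)) = 1 := by field_simp
    rw [this, Real.rpow_one]
  have eg : ∀ x, (W x ^ (2 / q) * η x ^ 2) ^ (q / 2) = W x * η x ^ q := fun x => by
    rw [Real.mul_rpow (Real.rpow_nonneg (hW0 x) _) (by positivity), ← Real.rpow_mul (hW0 x),
      ← Real.rpow_natCast, ← Real.rpow_mul (h0 x)]
    have h1 : 2 / q * (q / 2) = 1 := by field_simp
    have h2 : ((2 : ℕ) : ℝ) * (q / 2) = q := by push_cast; field_simp
    rw [h1, h2, Real.rpow_one]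
  have f0 : ∀ x, 0 ≤ W x ^ ((q - 2) / q) := fun x => Real.rpow_nonneg (hW0 x) _
  have g0 : ∀ x, 0 ≤ W x ^ (2 / q) * η x ^ 2 := fun x =>
    mul_nonneg (Real.rpow_nonneg (hW0 x) _) (by positivity)
  have mf : AEStronglyMeasurable (fun x => W x ^ ((q - 2) / q)) μ :=
    (mW.pow_const _).aestronglyMeasurable
  have mg : AEStronglyMeasurable (fun x => W x ^ (2 / q) * η x ^ 2) μ :=
    ((mW.pow_const _).mul (hη.measurable.pow_const 2).aemeasurable).aestronglyMeasurable
  have Lf : MemLp (fun x => W x ^ ((q - 2) / q)) (ENNReal.ofReal (q / (q - 2))) μ := by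
    rw [← integrable_norm_rpow_iff mf (by simp; positivity) (by simp),
      ENNReal.toReal_ofReal (by positivity)]
    refine hW.congr (Eventually.of_forall fun x => ?_)
    simp only
    rw [Real.norm_eq_abs, abs_of_nonneg (f0 x), ef]
  have Lg : MemLp (fun x => W x ^ (2 / q) * η x ^ 2) (ENNReal.ofReal (q / 2)) μ := by
    rw [← integrable_norm_rpow_iff mg (by simp; positivity) (by simp),
      ENNReal.toReal_ofReal (by positivity)]
    refine IWq.congr (Eventually.of_forall fun x => ?_)
    simp only
    rw [Real.norm_eq_abs, abs_of_nonneg (g0 x), eg]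
  have := integral_mul_le_Lp_mul_Lq_of_nonneg hc (Eventually.of_forall f0)
    (Eventually.of_forall g0) Lf Lg
  simp only [ef, eg, one_div_div] at this
  refine le_trans (le_of_eq ?_) this
  refine integral_congr_ae (Eventually.of_forall fun x => ?_)
  simp only
  rw [← mul_assoc, ← Real.rpow_add_of_nonneg (hW0 x) (by positivity) (by positivity)]
  have : (q - 2) / q + 2 / q = 1 := by field_simp; ring
  rw [this, Real.rpow_one]

/-- `p_ε = (1+|x|²)/(1+ε|x|²)` -/
def pp (ε : ℝ) (x : Euc N) : ℝ := ε⁻¹ + (ε⁻¹ * (ε - 1)) * rr ε x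

lemma pp_eq {ε : ℝ} (hε : 0 < ε) (x : Euc N) : pp ε x = (1 + ‖x‖ ^ 2) * rr ε x := by
  have : 0 < 1 + ε * ‖x‖ ^ 2 := by positivity
  rw [pp, rr]; field_simp; ring

lemma pp_pos {ε : ℝ} (hε : 0 < ε) (x : Euc N) : 0 < pp ε x := by
  rw [pp_eq hε]; have := rr_pos hε.le x; positivity

lemma pp_smooth {ε : ℝ} (hε : 0 < ε) : ContDiff ℝ (⊤ : ℕ∞) (pp (N := N) ε) :=
  contDiff_const.add (contDiff_const.mul (rr_smooth hε.le))

lemma pp_grad {ε : ℝ} (hε : 0 < ε) (x : Euc N) :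
    gradient (pp ε) x = (2 * (1 - ε) * rr ε x ^ 2) • x := by
  have := gradient_one_add (N := N) (rr_smooth hε.le) (a := ε⁻¹) (ε⁻¹ * (ε - 1)) x
  change gradient (fun y => ε⁻¹ + ε⁻¹ * (ε - 1) * rr ε y) x = _
  rw [this, rr_grad hε.le, smul_smul]
  congr 1
  field_simp; ring

lemma pp_le {ε : ℝ} (hε : 0 < ε) (h1 : ε ≤ 1) (x : Euc N) : pp ε x ≤ ε⁻¹ := by
  rw [pp_eq hε]; exact rr_bd hε h1 x

lemma pp_le' {ε : ℝ} (hε : 0 < ε) (x : Euc N) : pp ε x ≤ 1 + ‖x‖ ^ 2 := by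
  rw [pp_eq hε]
  exact mul_le_of_le_one_right (by positivity) (rr_le_one hε.le x)

lemma pp_grad_le {ε : ℝ} (hε : 0 < ε) (h1 : ε ≤ 1) (x : Euc N) :
    ‖gradient (pp ε) x‖ ≤ 2 * ε⁻¹ * sw x := by
  have h2 := rr_pos hε.le x
  have h3 := rr_le_one hε.le x
  have h4 := norm_rr_le_sw hε h1 x
  rw [pp_grad hε, norm_smul, Real.norm_eq_abs, abs_of_nonneg (by
    have : 0 ≤ 1 - ε := by linarith
    positivity)]
  have h5 : (1 - ε) * rr ε x ^ 2 ≤ rr ε x := by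
    have : (1 - ε) * rr ε x ^ 2 ≤ 1 * rr ε x ^ 2 := by gcongr; linarith
    nlinarith
  have h6 := mul_le_mul_of_nonneg_right h5 (norm_nonneg x)
  nlinarith

/-- `η_ε = √p_ε` -/
def et (ε : ℝ) (x : Euc N) : ℝ := √(pp ε x)

lemma et_sq {ε : ℝ} (hε : 0 < ε) (x : Euc N) : et ε x ^ 2 = pp ε x :=
  Real.sq_sqrt (pp_pos hε x).le

lemma et_pos {ε : ℝ} (hε : 0 < ε) (x : Euc N) : 0 < et ε x := Real.sqrt_pos.2 (pp_pos hε x)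

lemma et_smooth {ε : ℝ} (hε : 0 < ε) : ContDiff ℝ (⊤ : ℕ∞) (et (N := N) ε) :=
  (pp_smooth hε).sqrt (fun x => (pp_pos hε x).ne')

lemma et_le {ε : ℝ} (hε : 0 < ε) (h1 : ε ≤ 1) (x : Euc N) : et ε x ≤ ε⁻¹ := by
  have h2 := pp_le hε h1 x
  have h3 : 1 ≤ ε⁻¹ := (one_le_inv₀ hε).2 h1
  rw [← et_sq hε] at h2
  have := et_pos hε x
  by_contra hc
  push Not at hc
  nlinarith

lemma et_sw {ε : ℝ} (hε : 0 < ε) (x : Euc N) : (et ε x * sw x) ^ 2 = rr ε x := by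
  rw [mul_pow, et_sq hε, pp_eq hε, sw_sq]
  have : 0 < 1 + ‖x‖ ^ 2 := by positivity
  field_simp

lemma pp_grad_et {ε : ℝ} (hε : 0 < ε) (x : Euc N) :
    gradient (pp ε) x = (2 * et ε x) • gradient (et ε) x := by
  have hd : DifferentiableAt ℝ (et (N := N) ε) x := (et_smooth hε).differentiable (by simp) x
  have := gradient_mul hd hd
  have e : (fun y : Euc N => et ε y * et ε y) = pp ε := by
    funext y; rw [← et_sq hε]; ring
  rw [e] at this
  rw [this]; module

lemma et_grad_le {ε : ℝ} (hε : 0 < ε) (h1 : ε ≤ 1) (x : Euc N) :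
    ‖gradient (et ε) x‖ ≤ et ε x * sw x := by
  have h2 := rr_pos hε.le x
  have h3 := rr_le_one hε.le x
  have h4 := et_pos hε x
  have hs := sw_pos x
  have e : 2 * et ε x * ‖gradient (et ε) x‖ = 2 * (1 - ε) * rr ε x ^ 2 * ‖x‖ := by
    have := congrArg norm ((pp_grad_et hε x).symm.trans (pp_grad hε x))
    rw [norm_smul, norm_smul, Real.norm_eq_abs, Real.norm_eq_abs, abs_of_pos (by positivity),
      abs_of_nonneg (by
        have : 0 ≤ 1 - ε := by linarith
        positivity)] at this
    exact this
  have h5 : (1 - ε) * rr ε x ^ 2 ≤ rr ε x := by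
    have : (1 - ε) * rr ε x ^ 2 ≤ 1 * rr ε x ^ 2 := by gcongr; linarith
    nlinarith
  have h6 := mul_le_mul_of_nonneg_right h5 (norm_nonneg x)
  have h7 := et_sw hε x
  have h8 := norm_mul_sw_le x
  have h9 : rr ε x * ‖x‖ ≤ et ε x ^ 2 * sw x := by
    rw [← h7]
    have := mul_le_mul_of_nonneg_left h8 (by positivity : 0 ≤ et ε x ^ 2 * sw x)
    nlinarith
  have : et ε x * ‖gradient (et ε) x‖ ≤ et ε x * (et ε x * sw x) := by nlinarith
  exact le_of_mul_le_mul_left this h4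

end PZ

namespace PZ

open scoped Topology ENNReal

variable {N k : ℕ} {σ : ℝ}

lemma GSd.S_pos {w : Euc N → ℝ} {G : Euc N → Euc N} (d : GSd N k σ w G) : 0 < Sconst N k σ := by
  have h := d.hV.hardy d.hN
  rw [d.hS] at h
  have : 0 < ∫ x, (sw x * w x) ^ 2 := by
    rw [integral_pos_iff_support_of_nonneg (fun x => by positivity) d.hV.mu.integrable_sq]
    have : Function.support (fun x => (sw x * w x) ^ 2) = univ := by
      ext x
      have := sw_pos x
      have := d.pos x
      simp only [Function.mem_support, mem_univ, iff_true]
      positivity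
    rw [this]
    exact isOpen_univ.measure_pos volume ⟨0, trivial⟩
  linarith

lemma GSd.tail {w : Euc N → ℝ} {G : Euc N → Euc N} (d : GSd N k σ w G) :
    ∃ n : ℕ, (∫ x in (closedBall (0 : Euc N) n)ᶜ, Wd k σ w x) ^ ((twoStar N σ - 2) / twoStar N σ)
      ≤ 1 / 3 := by
  have hq := q_gt d.hN d.hσ
  have t := tendsto_setIntegral_of_antitone (μ := volume) (f := Wd k σ w)
    (s := fun n : ℕ => (closedBall (0 : Euc N) n)ᶜ)
    (fun n => measurableSet_closedBall.compl)
    (fun m n hmn => compl_subset_compl.2 (closedBall_subset_closedBall (by exact_mod_cast hmn)))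
    ⟨0, d.hW.integrableOn⟩
  have e : (⋂ n : ℕ, (closedBall (0 : Euc N) n)ᶜ) = ∅ := by
    rw [← compl_iUnion, iUnion_closedBall_nat, compl_univ]
  rw [e, setIntegral_empty] at t
  have hp : 0 < (twoStar N σ - 2) / twoStar N σ := div_pos (by linarith) (by linarith)
  have t2 := t.rpow_const (p := (twoStar N σ - 2) / twoStar N σ) (Or.inr hp.le)
  rw [Real.zero_rpow hp.ne'] at t2
  obtain ⟨n, hn⟩ := (t2.eventually (gt_mem_nhds (by norm_num : (0:ℝ) < 1 / 3))).exists
  exact ⟨n, hn.le⟩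

lemma GSd.decay {w : Euc N → ℝ} {G : Euc N → Euc N} (d : GSd N k σ w G) :
    ∃ M : ℝ, ∀ ε : ℝ, 0 < ε → ε ≤ 1 →
      (Integrable (fun x => rr ε x * w x ^ 2) ∧ ∫ x, rr ε x * w x ^ 2 ≤ M) ∧
      (Integrable (fun x => pp ε x * ‖G x‖ ^ 2) ∧ ∫ x, pp ε x * ‖G x‖ ^ 2 ≤ M) ∧
      (Integrable (fun x => pp ε x * Wd k σ w x) ∧ ∫ x, pp ε x * Wd k σ w x ≤ M) := by
  obtain ⟨n, hn⟩ := d.tail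
  set q := twoStar N σ with hqd
  set S := Sconst N k σ with hSd
  have hq : 2 < q := q_gt d.hN d.hσ
  have hSp : 0 < S := d.S_pos
  set R : ℝ := 1 + (n : ℝ) ^ 2 with hR
  have hR0 : 0 < R := by positivity
  have W0 : ∀ x, 0 ≤ Wd k σ w x := Wd_nonneg d.pos
  refine ⟨27 * (S * R) + 3 * R, fun ε hε h1 => ?_⟩
  have hεi : 0 < ε⁻¹ := inv_pos.2 hε
  have hv := d.hV.mul (C := ε⁻¹) (et_smooth hε)
    (fun x => by rw [abs_of_pos (et_pos hε x)]; exact et_le hε h1 x)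
    (fun x => (et_grad_le hε h1 x).trans
      (mul_le_mul_of_nonneg_right (et_le hε h1 x) (sw_pos x).le))
  set H : Euc N → Euc N := fun x => et ε x • G x + w x • gradient (et ε) x with hH
  set B := ∫ x, ‖H x‖ ^ 2 with hB
  have hB0 : 0 ≤ B := integral_nonneg fun x => by positivity
  have hardy := hv.hardy d.hN
  have hs := hv.hs (k := k) d.hN d.hk d.h0 d.hσ
  have el := d.EL (h := pp ε) (C := 2 * ε⁻¹) (pp_smooth hε)
    (fun x => by rw [abs_of_pos (pp_pos hε x)]; linarith [pp_le hε h1 x]) (pp_grad_le hε h1)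
  rw [← hB] at hs hardy
  rw [← hSd] at el hs
  have e1 : ∀ x, (sw x * (et ε x * w x)) ^ 2 = rr ε x * w x ^ 2 := fun x => by
    rw [← et_sw hε]; ring
  have I1 : Integrable (fun x => rr ε x * w x ^ 2) := by
    have := hv.mu.integrable_sq
    simpa only [e1] using this
  simp only [e1] at hardy
  have b2 : ∀ x, ‖w x • gradient (et ε) x‖ ^ 2 ≤ rr ε x * w x ^ 2 := fun x => by
    rw [norm_smul, mul_pow, Real.norm_eq_abs, sq_abs, ← et_sw hε, mul_comm]
    have := et_grad_le hε h1 x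
    gcongr
  have mgr : AEStronglyMeasurable (fun x => w x • gradient (et (N := N) ε) x) volume :=
    d.hV.meas.smul (gradient_meas _)
  have I2 : Integrable (fun x => ‖w x • gradient (et ε) x‖ ^ 2) := by
    refine I1.mono' (mgr.norm.pow 2) (Eventually.of_forall fun x => ?_)
    rw [Real.norm_eq_abs, abs_of_nonneg (by positivity)]
    exact b2 x
  have le2 : ∫ x, ‖w x • gradient (et ε) x‖ ^ 2 ≤ 4 / 9 * B :=
    (integral_mono I2 I1 b2).trans hardy
  have IH : Integrable (fun x => ‖H x‖ ^ 2) := hv.mH.integrable_norm_pow (p := 2) (by simp)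
  have I3 : Integrable (fun x => pp ε x * ‖G x‖ ^ 2) := by
    have i := d.hV.mH.integrable_norm_pow (p := 2) (by simp)
    refine i.bdd_mul (c := ε⁻¹) (pp_smooth hε).continuous.aestronglyMeasurable
      (Eventually.of_forall fun x => ?_)
    rw [Real.norm_eq_abs, abs_of_pos (pp_pos hε x)]
    exact pp_le hε h1 x
  have le3 : ∫ x, pp ε x * ‖G x‖ ^ 2 ≤ 3 * B := by
    have : ∫ x, pp ε x * ‖G x‖ ^ 2 ≤
        ∫ x, (2 * ‖H x‖ ^ 2 + 2 * ‖w x • gradient (et ε) x‖ ^ 2) := by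
      refine integral_mono I3 ((IH.const_mul 2).add (I2.const_mul 2)) fun x => ?_
      simp only
      have e : et ε x • G x = H x - w x • gradient (et ε) x := by rw [hH]; simp
      have e' : pp ε x * ‖G x‖ ^ 2 = ‖et ε x • G x‖ ^ 2 := by
        rw [norm_smul, mul_pow, Real.norm_eq_abs, sq_abs, et_sq hε]
      rw [e', e]
      have := norm_sub_le (H x) (w x • gradient (et ε) x)
      have := pow_le_pow_left₀ (norm_nonneg _) this 2
      nlinarith [sq_nonneg (‖H x‖ - ‖w x • gradient (et ε) x‖)]
    rw [integral_add (IH.const_mul 2) (I2.const_mul 2), integral_const_mul,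
      integral_const_mul] at this
    linarith
  have I4 : Integrable (fun x => Wd k σ w x * pp ε x) := by
    refine d.hW.mul_bdd (c := ε⁻¹) (pp_smooth hε).continuous.aestronglyMeasurable
      (Eventually.of_forall fun x => ?_)
    rw [Real.norm_eq_abs, abs_of_pos (pp_pos hε x)]
    exact pp_le hε h1 x
  set a := ∫ x, Wd k σ w x * pp ε x with ha
  have eB : B = S * a + ∫ x, ‖w x • gradient (et ε) x‖ ^ 2 := by
    rw [← el]
    have mpp : MemLp (fun x => pp ε x • G x + w x • gradient (pp ε) x) 2 volume :=
      (d.hV.mul (C := 2 * ε⁻¹) (pp_smooth hε)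
        (fun x => by rw [abs_of_pos (pp_pos hε x)]; linarith [pp_le hε h1 x])
        (pp_grad_le hε h1)).mH
    rw [← integral_add (int_inner d.hV.mH mpp) I2, hB]
    refine integral_congr_ae (Eventually.of_forall fun x => ?_)
    simp only
    rw [hH]
    simp only
    rw [norm_add_sq_real, pp_grad_et hε, inner_add_right, inner_smul_right, inner_smul_right,
      inner_smul_right, inner_smul_left, inner_smul_right, real_inner_self_eq_norm_sq,
      norm_smul (et ε x), mul_pow, Real.norm_eq_abs, sq_abs, et_sq hε]
    simp
    ring
  set A := (closedBall (0 : Euc N) n)ᶜ with hA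
  have mA : MeasurableSet A := measurableSet_closedBall.compl
  have ea : a = (∫ x in A, Wd k σ w x * pp ε x) + ∫ x in Aᶜ, Wd k σ w x * pp ε x :=
    (integral_add_compl mA I4).symm
  have la1 : ∫ x in Aᶜ, Wd k σ w x * pp ε x ≤ R := by
    have : ∫ x in Aᶜ, Wd k σ w x * pp ε x ≤ ∫ x in Aᶜ, Wd k σ w x * R := by
      refine setIntegral_mono_on I4.integrableOn (d.hW.mul_const R).integrableOn mA.compl
        fun x hx => ?_
      refine mul_le_mul_of_nonneg_left ((pp_le' hε x).trans ?_) (W0 x)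
      rw [hA, compl_compl, mem_closedBall_zero_iff] at hx
      rw [hR]; gcongr
    refine this.trans ?_
    rw [integral_mul_const]
    have : ∫ x in Aᶜ, Wd k σ w x ≤ 1 := by
      rw [← d.hW1]
      exact setIntegral_le_integral d.hW (Eventually.of_forall W0)
    nlinarith
  set m := hsInt N k σ (fun x => et ε x * w x) with hm
  have em : m = ∫ x, Wd k σ w x * et ε x ^ q := by
    rw [hm, hsInt]
    refine integral_congr_ae (Eventually.of_forall fun x => ?_)
    simp only
    have := et_pos hε x
    rw [abs_of_pos (mul_pos this (d.pos x)), Real.mul_rpow this.le (d.pos x).le, Wd]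
    ring
  have IWq : Integrable (fun x => Wd k σ w x * et ε x ^ q) := by
    refine d.hW.mul_bdd (c := ε⁻¹ ^ q)
      ((et_smooth hε).continuous.measurable.pow_const q).aestronglyMeasurable
      (Eventually.of_forall fun x => ?_)
    have h0 := (et_pos hε x).le
    rw [Real.norm_eq_abs, abs_of_nonneg (Real.rpow_nonneg h0 _)]
    exact Real.rpow_le_rpow h0 (et_le hε h1 x) (by linarith)
  have Wq0 : ∀ x, 0 ≤ Wd k σ w x * et ε x ^ q := fun x =>
    mul_nonneg (W0 x) (Real.rpow_nonneg (et_pos hε x).le _)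
  have la2 : ∫ x in A, Wd k σ w x * pp ε x ≤ 1 / 3 * m ^ (2 / q) := by
    have := holder_aux (μ := volume.restrict A) hq d.hW.restrict W0 (et_smooth hε).continuous
      (fun x => (et_pos hε x).le) (et_le hε h1)
    simp only [et_sq hε] at this
    refine this.trans ?_
    have h2 : (∫ x in A, Wd k σ w x * et ε x ^ q) ^ (2 / q) ≤ m ^ (2 / q) := by
      refine Real.rpow_le_rpow (integral_nonneg Wq0) ?_ (by positivity)
      rw [em]
      exact setIntegral_le_integral IWq (Eventually.of_forall Wq0)
    exact mul_le_mul hn h2 (Real.rpow_nonneg (integral_nonneg Wq0) _) (by norm_num)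
  have hSa : S * a ≤ S * R + B / 3 := by
    have : S * a ≤ S * (1 / 3 * m ^ (2 / q) + R) := by gcongr; rw [ea]; linarith
    linarith
  have hBb : B ≤ 9 / 2 * (S * R) := by linarith
  have hSR : 0 < S * R := by positivity
  have ha' : a ≤ 3 * R := by
    have : S * a ≤ S * (3 * R) := by linarith
    exact le_of_mul_le_mul_left this hSp
  refine ⟨⟨I1, by linarith⟩, ⟨I3, by linarith⟩, ?_, ?_⟩
  · exact I4.congr (Eventually.of_forall fun x => mul_comm _ _)
  · have : ∫ x, pp ε x * Wd k σ w x = a := by simp only [ha, mul_comm]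
    linarith

lemma rr_tend (x : Euc N) :
    Tendsto (fun n : ℕ => rr (1 / ((n : ℝ) + 1)) x) atTop (𝓝 1) := by
  have t := tendsto_one_div_add_atTop_nhds_zero_nat (𝕜 := ℝ)
  have := ((t.mul_const (‖x‖ ^ 2)).const_add 1).inv₀ (by simp)
  simpa [rr] using this

lemma ep_pos (n : ℕ) : 0 < 1 / ((n : ℝ) + 1) := by positivity

lemma ep_le (n : ℕ) : 1 / ((n : ℝ) + 1) ≤ 1 := by
  rw [div_le_one (by positivity)]; simp

lemma GSd.int {w : Euc N → ℝ} {G : Euc N → Euc N} (d : GSd N k σ w G) :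
    Integrable (fun x => w x ^ 2) ∧ Integrable (fun x => (1 + ‖x‖ ^ 2) * ‖G x‖ ^ 2) ∧
      Integrable (fun x => (1 + ‖x‖ ^ 2) * Wd k σ w x) := by
  obtain ⟨M, hM⟩ := d.decay
  have pt : ∀ x : Euc N, Tendsto (fun n : ℕ => pp (1 / ((n : ℝ) + 1)) x) atTop
      (𝓝 (1 + ‖x‖ ^ 2)) := fun x => by
    have := (rr_tend x).const_mul (1 + ‖x‖ ^ 2)
    simp only [← pp_eq (ep_pos _), mul_one] at this
    exact this
  refine ⟨?_, ?_, ?_⟩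
  · refine fatou_int (fun n => (hM _ (ep_pos n) (ep_le n)).1.1) (fun n x => ?_)
      (fun n => (hM _ (ep_pos n) (ep_le n)).1.2) (fun x => ?_)
    · have := rr_pos (ep_pos n).le x
      positivity
    · simpa using (rr_tend x).mul_const (w x ^ 2)
  · refine fatou_int (fun n => (hM _ (ep_pos n) (ep_le n)).2.1.1) (fun n x => ?_)
      (fun n => (hM _ (ep_pos n) (ep_le n)).2.1.2) (fun x => (pt x).mul_const _)
    have := pp_pos (ep_pos n) x
    positivity
  · refine fatou_int (fun n => (hM _ (ep_pos n) (ep_le n)).2.2.1) (fun n x => ?_)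
      (fun n => (hM _ (ep_pos n) (ep_le n)).2.2.2) (fun x => (pt x).mul_const _)
    exact mul_nonneg (pp_pos (ep_pos n) x).le (Wd_nonneg d.pos x)

end PZ

namespace PZ

open scoped Topology ENNReal

variable {N k : ℕ} {σ : ℝ}

lemma hi_tend (i : Fin N) (x : Euc N) :
    Tendsto (fun n : ℕ => hi (1 / ((n : ℝ) + 1)) i x) atTop (𝓝 (x i ^ 2)) := by
  have := ((rr_tend x).const_mul (x i)).const_mul (x i)
  rw [mul_one, ← sq] at this
  exact this

lemma fi_tend (i : Fin N) (x : Euc N) :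
    Tendsto (fun n : ℕ => fi (1 / ((n : ℝ) + 1)) i x) atTop (𝓝 (x i)) := by
  have := (rr_tend x).const_mul (x i)
  rw [mul_one] at this
  exact this

lemma GSd.coord {w : Euc N → ℝ} {G : Euc N → Euc N} (d : GSd N k σ w G) (i : Fin N) :
    Integrable (fun x => x i ^ 2 * ‖G x‖ ^ 2) ∧ Integrable (fun x => x i ^ 2 * Wd k σ w x) ∧
    (∫ x, x i ^ 2 * ‖G x‖ ^ 2) - ∫ x, w x ^ 2 = Sconst N k σ * ∫ x, x i ^ 2 * Wd k σ w x := by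
  obtain ⟨J1, J2, J3⟩ := d.int
  have W0 : ∀ x, 0 ≤ Wd k σ w x := Wd_nonneg d.pos
  have mc : AEStronglyMeasurable (fun x : Euc N => x i) volume :=
    (coord_smooth i).continuous.aestronglyMeasurable
  have mG := d.hV.mH.1
  have mw := d.hV.meas
  have mGi : AEStronglyMeasurable (fun x => G x i) volume :=
    (EuclideanSpace.proj (𝕜 := ℝ) i).continuous.comp_aestronglyMeasurable mG
  have xi2 : ∀ x : Euc N, x i ^ 2 ≤ ‖x‖ ^ 2 := fun x => by
    rw [← sq_abs]; have := abs_coord_le x i; gcongr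
  have K1 : Integrable (fun x => x i ^ 2 * ‖G x‖ ^ 2) := by
    refine J2.mono' ((mc.pow 2).mul (mG.norm.pow 2)) (Eventually.of_forall fun x => ?_)
    rw [Real.norm_eq_abs, abs_of_nonneg (by positivity)]
    have := xi2 x
    gcongr
    linarith
  have K2 : Integrable (fun x => x i ^ 2 * Wd k σ w x) := by
    refine J3.mono' ((mc.pow 2).mul d.hW.1) (Eventually.of_forall fun x => ?_)
    rw [Real.norm_eq_abs, abs_of_nonneg (mul_nonneg (by positivity) (W0 x))]
    refine mul_le_mul_of_nonneg_right ?_ (W0 x)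
    linarith [xi2 x]
  have wGx : ∀ x, w x * (‖G x‖ * ‖x‖) ≤ 1 / 2 * (w x ^ 2 + (1 + ‖x‖ ^ 2) * ‖G x‖ ^ 2) := fun x => by
    nlinarith [sq_nonneg (w x - ‖G x‖ * ‖x‖), sq_nonneg ‖G x‖]
  have K3 : Integrable (fun x => w x * (G x i * x i)) := by
    refine (J1.add J2).mono' (mw.mul (mGi.mul mc)) (Eventually.of_forall fun x => ?_)
    rw [Real.norm_eq_abs, abs_mul, abs_mul, abs_of_pos (d.pos x)]
    have h1 := abs_coord_le x i
    have h2 := abs_coord_le (G x) i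
    have h3 : w x * (|G x i| * |x i|) ≤ w x * (‖G x‖ * ‖x‖) := by
      have := d.pos x
      gcongr
    have h4 := wGx x
    have : 0 ≤ w x * (‖G x‖ * ‖x‖) := by have := d.pos x; positivity
    simp only [Pi.add_apply]
    linarith
  refine ⟨K1, K2, ?_⟩
  have ept := tendsto_one_div_add_atTop_nhds_zero_nat (𝕜 := ℝ)
  have hiC : ∀ (n : ℕ) (x : Euc N), |hi (1 / ((n : ℝ) + 1)) i x| ≤ 4 * (1 / ((n : ℝ) + 1))⁻¹ :=
    fun n x => by
      have := hi_abs_le (ep_pos n) (ep_le n) i x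
      have := inv_pos.2 (ep_pos n)
      linarith
  have hiC' : ∀ (n : ℕ) (x : Euc N), ‖gradient (hi (1 / ((n : ℝ) + 1)) i) x‖ ≤
      4 * (1 / ((n : ℝ) + 1))⁻¹ * sw x := fun n x => by
    have := hi_grad_le (ep_pos n).le i x
    have := norm_rr_le_sw (ep_pos n) (ep_le n) x
    linarith
  have el := fun n : ℕ => d.EL (hi_smooth (ep_pos n).le i) (hiC n) (hiC' n)
  have lim1 : Tendsto (fun n : ℕ => ∫ x, inner ℝ (G x) (hi (1 / ((n : ℝ) + 1)) i x • G x +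
      w x • gradient (hi (1 / ((n : ℝ) + 1)) i) x)) atTop
      (𝓝 (∫ x, (x i ^ 2 * ‖G x‖ ^ 2 + 2 * (w x * (G x i * x i))))) := by
    refine tendsto_integral_of_dominated_convergence
      (fun x => 3 * ((1 + ‖x‖ ^ 2) * ‖G x‖ ^ 2) + 2 * w x ^ 2) (fun n => ?_)
      ((J2.const_mul 3).add (J1.const_mul 2)) (fun n => Eventually.of_forall fun x => ?_)
      (Eventually.of_forall fun x => ?_)
    · exact (int_inner d.hV.mH (d.hV.mul (hi_smooth (ep_pos n).le i) (hiC n) (hiC' n)).mH).1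
    · set ε := 1 / ((n : ℝ) + 1)
      have hε : 0 < ε := ep_pos n
      rw [inner_add_right, inner_smul_right, inner_smul_right, real_inner_self_eq_norm_sq]
      have h1 := hi_nonneg hε.le i x
      have h2 := hi_le_sq hε.le i x
      have h3 := hi_grad_le hε.le i x
      have h4 : ‖x‖ * rr ε x ≤ ‖x‖ :=
        mul_le_of_le_one_right (norm_nonneg _) (rr_le_one hε.le x)
      have h5 := xi2 x
      have hp := d.pos x
      refine (norm_add_le _ _).trans ?_
      have a1 : ‖hi ε i x * ‖G x‖ ^ 2‖ ≤ (1 + ‖x‖ ^ 2) * ‖G x‖ ^ 2 := by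
        rw [Real.norm_eq_abs, abs_of_nonneg (by positivity)]
        gcongr
        linarith
      have a2 : ‖w x * inner ℝ (G x) (gradient (hi ε i) x)‖ ≤ 4 * (w x * (‖G x‖ * ‖x‖)) := by
        rw [norm_mul, Real.norm_eq_abs, abs_of_pos hp]
        have := norm_inner_le_norm (𝕜 := ℝ) (G x) (gradient (hi ε i) x)
        have h6 : ‖G x‖ * ‖gradient (hi ε i) x‖ ≤ ‖G x‖ * (4 * ‖x‖) := by
          gcongr; linarith
        have := mul_le_mul_of_nonneg_left (this.trans h6) hp.le
        linarith
      have := wGx x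
      linarith
    · have e : ∀ n : ℕ, inner ℝ (G x) (hi (1 / ((n : ℝ) + 1)) i x • G x +
          w x • gradient (hi (1 / ((n : ℝ) + 1)) i) x) =
          hi (1 / ((n : ℝ) + 1)) i x * ‖G x‖ ^ 2 + w x *
          (-(2 * (1 / ((n : ℝ) + 1)) * rr (1 / ((n : ℝ) + 1)) x ^ 2 * (x i) ^ 2) * inner ℝ (G x) x
            + 2 * x i * rr (1 / ((n : ℝ) + 1)) x * G x i) := fun n => by
        rw [hi_grad (ep_pos n).le, inner_add_right, inner_smul_right, inner_smul_right,
          real_inner_self_eq_norm_sq, inner_add_right, inner_smul_right, inner_smul_right,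
          EuclideanSpace.inner_single_right]
        simp
      simp only [e]
      have t := ((hi_tend i x).mul_const (‖G x‖ ^ 2)).add
        ((((((ept.const_mul 2).mul ((rr_tend x).pow 2)).mul_const (x i ^ 2)).neg.mul_const
          (inner ℝ (G x) x)).add (((rr_tend x).const_mul (2 * x i)).mul_const (G x i))).const_mul
            (w x))
      convert t using 2
      ring
  have lim2 : Tendsto (fun n : ℕ => ∫ x, Wd k σ w x * hi (1 / ((n : ℝ) + 1)) i x) atTop
      (𝓝 (∫ x, x i ^ 2 * Wd k σ w x)) := by
    refine tendsto_integral_of_dominated_convergence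
      (fun x => x i ^ 2 * Wd k σ w x) (fun n => ?_) K2
      (fun n => Eventually.of_forall fun x => ?_) (Eventually.of_forall fun x => ?_)
    · exact d.hW.1.mul (hi_smooth (ep_pos n).le i).continuous.aestronglyMeasurable
    · have h1 := hi_nonneg (ep_pos n).le i x
      have h2 := hi_le_sq (ep_pos n).le i x
      rw [Real.norm_eq_abs, abs_of_nonneg (mul_nonneg (W0 x) h1), mul_comm]
      exact mul_le_mul_of_nonneg_right h2 (W0 x)
    · rw [mul_comm (x i ^ 2)]
      exact (hi_tend i x).const_mul _
  have eq1 := tendsto_nhds_unique lim1 ((lim2.const_mul (Sconst N k σ)).congr fun n => (el n).symm)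
  have ib := fun n : ℕ => d.hV.ibp (C := 3 * (1 / ((n : ℝ) + 1))⁻¹)
    (fi_smooth (ep_pos n).le i) i
    (fun x => by
      have := fi_le (ep_pos n) (ep_le n) i x
      have h2 := inv_pos.2 (ep_pos n)
      have := mul_pos h2 (sw_pos x)
      linarith)
    (fun x => by
      have := fi_grad_abs (ep_pos n).le i x
      have := rr_le_sw (ep_pos n) (ep_le n) x
      linarith)
  have lim3 : Tendsto (fun n : ℕ => ∫ x, (w x ^ 2 * gradient (fi (1 / ((n : ℝ) + 1)) i) x i +
      2 * (w x * G x i * fi (1 / ((n : ℝ) + 1)) i x))) atTop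
      (𝓝 (∫ x, (w x ^ 2 + 2 * (w x * (G x i * x i))))) := by
    refine tendsto_integral_of_dominated_convergence
      (fun x => 4 * w x ^ 2 + (1 + ‖x‖ ^ 2) * ‖G x‖ ^ 2) (fun n => ?_)
      ((J1.const_mul 4).add J2) (fun n => Eventually.of_forall fun x => ?_)
      (Eventually.of_forall fun x => ?_)
    · refine ((mw.pow 2).mul ?_).add (((mw.mul mGi).mul
        (fi_smooth (ep_pos n).le i).continuous.aestronglyMeasurable).const_mul 2)
      exact (EuclideanSpace.proj (𝕜 := ℝ) i).continuous.comp_aestronglyMeasurable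
        (gradient_meas _)
    · set ε := 1 / ((n : ℝ) + 1)
      have hε : 0 < ε := ep_pos n
      have hp := d.pos x
      have h1 := rr_le_one hε.le x
      have h1' := rr_pos hε.le x
      have h2 := fi_grad_abs hε.le i x
      have h3 := abs_coord_le x i
      have h4 := abs_coord_le (G x) i
      have h5 : |fi ε i x| ≤ ‖x‖ := by
        rw [fi, abs_mul, abs_of_pos h1']
        exact (mul_le_of_le_one_right (abs_nonneg _) h1).trans h3
      refine (norm_add_le _ _).trans ?_
      have a1 : ‖w x ^ 2 * gradient (fi ε i) x i‖ ≤ 3 * w x ^ 2 := by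
        rw [Real.norm_eq_abs, abs_mul, abs_of_nonneg (by positivity : 0 ≤ w x ^ 2), mul_comm]
        gcongr
        linarith
      have a2 : ‖2 * (w x * G x i * fi ε i x)‖ ≤ 2 * (w x * (‖G x‖ * ‖x‖)) := by
        rw [Real.norm_eq_abs, abs_mul, abs_mul, abs_mul, abs_of_pos hp, abs_two, mul_assoc (w x)]
        gcongr
      have := wGx x
      linarith
    · simp only [fi_grad_i (ep_pos _).le]
      have t := (((rr_tend x).sub (((ept.const_mul 2).mul ((rr_tend x).pow 2)).mul_const
        (x i ^ 2))).const_mul (w x ^ 2)).add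
        (((fi_tend i x).const_mul (w x * G x i)).const_mul 2)
      convert t using 2
      ring
  have eq2 := tendsto_nhds_unique lim3 (tendsto_const_nhds.congr fun n => (ib n).symm)
  rw [integral_add K1 (K3.const_mul 2), integral_const_mul] at eq1
  rw [integral_add J1 (K3.const_mul 2), integral_const_mul] at eq2
  linarith

theorem final (hN : 5 ≤ N) (hk : k + 2 ≤ N) (h0 : 0 < σ) (hσ : σ < 2) {w : Euc N → ℝ}
    (hw : GroundState N k σ w) :
    Integrable (fun x => zNorm N k x ^ 2 * ‖fderiv ℝ w x‖ ^ 2) ∧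
    Integrable (fun x => w x ^ 2) ∧
    Integrable (fun x => zNorm N k x ^ ((2 : ℝ) - σ) * w x ^ twoStar N σ) ∧
    Sconst N k σ * ∫ x, zNorm N k x ^ ((2 : ℝ) - σ) * w x ^ twoStar N σ =
      (∫ x, zNorm N k x ^ 2 * ‖fderiv ℝ w x‖ ^ 2) -
        ((N : ℝ) - k) * ∫ x, w x ^ 2 := by
  have d := gsd_of hN hk h0 hσ hw
  have e1 : (fun x => zNorm N k x ^ 2 * ‖fderiv ℝ w x‖ ^ 2) =
      fun x => ∑ i : Fin N, if k ≤ (i : ℕ) then x i ^ 2 * ‖gradient w x‖ ^ 2 else 0 := by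
    funext x
    rw [zNorm_sq, norm_gradient, Finset.sum_mul]
    refine Finset.sum_congr rfl fun i _ => ?_
    split_ifs <;> simp
  have e2 : (fun x => zNorm N k x ^ ((2 : ℝ) - σ) * w x ^ twoStar N σ) =ᵐ[volume]
      fun x => ∑ i : Fin N, if k ≤ (i : ℕ) then x i ^ 2 * Wd k σ w x else 0 := by
    filter_upwards [zNorm_pos_ae hk] with x hx
    have : zNorm N k x ^ ((2 : ℝ) - σ) * w x ^ twoStar N σ = zNorm N k x ^ 2 * Wd k σ w x := by
      rw [Wd, ← mul_assoc, sub_eq_add_neg, Real.rpow_add hx]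
      norm_num
    rw [this, zNorm_sq, Finset.sum_mul]
    refine Finset.sum_congr rfl fun i _ => ?_
    split_ifs <;> simp
  have i1 : ∀ i ∈ (Finset.univ : Finset (Fin N)),
      Integrable (fun x => if k ≤ (i : ℕ) then x i ^ 2 * ‖gradient w x‖ ^ 2 else 0) := by
    intro i _
    split_ifs
    · exact (d.coord i).1
    · exact integrable_zero _ _ _
  have i2 : ∀ i ∈ (Finset.univ : Finset (Fin N)),
      Integrable (fun x => if k ≤ (i : ℕ) then x i ^ 2 * Wd k σ w x else 0) := by
    intro i _
    split_ifs
    · exact (d.coord i).2.1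
    · exact integrable_zero _ _ _
  refine ⟨?_, d.int.1, ?_, ?_⟩
  · rw [e1]; exact integrable_finsetSum _ i1
  · exact (integrable_finsetSum _ i2).congr e2.symm
  · rw [e1, integral_congr_ae e2, integral_finsetSum _ i1, integral_finsetSum _ i2,
      Finset.mul_sum]
    have s : ∀ i : Fin N, Sconst N k σ * ∫ x, (if k ≤ (i : ℕ) then x i ^ 2 * Wd k σ w x else 0) =
        (∫ x, if k ≤ (i : ℕ) then x i ^ 2 * ‖gradient w x‖ ^ 2 else 0) -
        (if k ≤ (i : ℕ) then 1 else 0) * ∫ x, w x ^ 2 := by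
      intro i
      split_ifs
      · rw [one_mul]; exact (d.coord i).2.2.symm
      · simp
    simp only [s]
    rw [Finset.sum_sub_distrib, ← Finset.sum_mul]
    have c : ∑ i : Fin N, (if k ≤ (i : ℕ) then (1 : ℝ) else 0) = (N : ℝ) - k := by
      have := Fin.sum_univ_eq_sum_range (fun j : ℕ => if k ≤ j then (1 : ℝ) else 0) N
      rw [this]
      have hsplit := Finset.sum_range_add_sum_Ico (fun j : ℕ => if k ≤ j then (1 : ℝ) else 0)
        (by omega : k ≤ N)
      rw [← hsplit]
      have z : ∑ j ∈ Finset.range k, (if k ≤ j then (1 : ℝ) else 0) = 0 :=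
        Finset.sum_eq_zero fun j hj => by
          rw [Finset.mem_range] at hj; rw [if_neg (by omega)]
      have o : ∑ j ∈ Finset.Ico k N, (if k ≤ j then (1 : ℝ) else 0) =
          ∑ j ∈ Finset.Ico k N, (1 : ℝ) :=
        Finset.sum_congr rfl fun j hj => by
          rw [Finset.mem_Ico] at hj; rw [if_pos hj.1]
      rw [z, o]
      simp [Nat.cast_sub (by omega : k ≤ N)]
    rw [c]

end PZ

/-- Pohozaev-type identity in the `z`-variable: for `N ≥ 5`,
`1 ≤ k ≤ N-2`, `σ ∈ (0,2)` and a positive ground state `w` for `S_{N,σ}`, the integrals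
`∫ |z|²|∇w|²`, `∫ w²`, `∫ |z|^{2-σ} w^{2*_σ}` are finite and
`S_{N,σ} ∫ |z|^{2-σ} w^{2*_σ} = ∫ |z|²|∇w|² − (N-k) ∫ w²`. -/
theorem statement14 (N k : ℕ) (σ : ℝ) (hN : 5 ≤ N) (hk1 : 1 ≤ k) (hk2 : k ≤ N - 2)
    (hσ : σ ∈ Set.Ioo (0 : ℝ) 2) (w : Euc N → ℝ) (hw : GroundState N k σ w) :
    Integrable (fun x => zNorm N k x ^ 2 * ‖fderiv ℝ w x‖ ^ 2) ∧
    Integrable (fun x => w x ^ 2) ∧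
    Integrable (fun x => zNorm N k x ^ ((2 : ℝ) - σ) * w x ^ twoStar N σ) ∧
    Sconst N k σ * ∫ x, zNorm N k x ^ ((2 : ℝ) - σ) * w x ^ twoStar N σ =
      (∫ x, zNorm N k x ^ 2 * ‖fderiv ℝ w x‖ ^ 2) -
        ((N : ℝ) - k) * ∫ x, w x ^ 2 := by
  exact PZ.final hN (by omega) hσ.1 hσ.2 hw
end
end
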